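/- arXiv:2006.06107 — 4 statements merged into one kernel-verified Lean document; each statement's English description precedes it below -/
import Mathlib

section
/- Let W^h = W_{k_1} ∪ W_{k_2} ∪ ⋯ ∪ W_{k_m} be a vertex-disjoint union of m wheels (each k_i ≥ 4) in which exactly h of the wheels have an even number of vertices, and suppose h ≥ 1. Then there exists n₀ such that for all n > n₀, the join K_{h−1} ⊗ T(n−h+1, 3) of a complete graph on h−1 vertices with the Turán graph T(n−h+1,3) is, up to isomorphism, the unique W^h-free graph on n vertices with ex(n, W^h) edges. -/
/-!
Write `a = h - 1`. The join `K_a ⊗ T(n - a, 3)` contains no copy of the union of wheels: an even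
wheel has an odd cycle as rim, hence is not 3-colourable, so each of the `h` disjoint even wheels
would need its own vertex in `K_a` (`not_contains`).

Conversely let `G` be a free graph on `n` vertices, `n` large, with at least as many edges as the
join. The main point is `exists_structure`: some `a` vertices can be deleted so that the rest is
3-colourable. Given this, the number of edges is at most `a (a - 1) / 2 + a (n - a)` plus the number
of edges of the remaining `K₄`-free graph, and Turán's theorem gives both the bound and the
uniqueness (`iso_of_structure`).

For the structure one first passes to an induced subgraph of minimum degree about `2n / 3`; the
density is so close to the maximum that in the end no vertex was lost. Erdős–Stone gives a
complete tripartite subgraph with parts `A 0, A 1, A 2` of large constant size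
(`exists_tripartite`). Over three sets that are almost completely joined to each other, odd wheels
can be embedded freely, and an even wheel can be embedded around a *seed* (`IsSeed`): a vertex with
many neighbours in each set serves as hub, and an edge whose two ends are both almost complete to
two of the sets serves as an edge of the rim. Embedding the wheels greedily, `h` disjoint seeds
would produce the whole union (`contains_of_seeds`), so there are at most `h - 1` of them; taking a
maximal matching of edge seeds shows that all edge seeds are covered by few vertices
(`exists_cover`).

This argument is used twice. Over the constant-size sets, a double count of the edges towards
`A 0 ∪ A 1 ∪ A 2` shows that all but a small proportion of the vertices miss few vertices of two of
the sets, and so, after deleting a bounded cover, `G` has three large independent sets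
(`exists_rough`). Over these three sets every vertex is either a vertex seed or is almost complete
to two of them, whence a set `B` of `b ≤ h - 1` vertices such that the edges inside the three
classes of the remaining vertices are covered by at most `2 (h - 1 - b)` vertices and have inner
degree at most `n / 12` (`exists_fine`). Counting edges (`E2_le`), a deficit `h - 1 - b > 0` loses
more edges from `B` than the inner edges can restore. So `b = h - 1`, and no inner edges are left.
-/

open SimpleGraph

/-- `G` contains `H` as a (not necessarily induced) subgraph. -/
def Contains {α β : Type*} (G : SimpleGraph α) (H : SimpleGraph β) : Prop :=
  ∃ f : H →g G, Function.Injective f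

/-- The join `G₁ ⊗ G₂` of two graphs: disjoint union plus all cross edges. -/
def graphJoin {α β : Type*} (G : SimpleGraph α) (H : SimpleGraph β) :
    SimpleGraph (α ⊕ β) :=
  SimpleGraph.fromRel (fun u v =>
    match u, v with
    | Sum.inl a, Sum.inl b => G.Adj a b
    | Sum.inr a, Sum.inr b => H.Adj a b
    | Sum.inl _, Sum.inr _ => True
    | Sum.inr _, Sum.inl _ => True)

/-- The wheel `W_q` on `q` vertices: a hub joined to all vertices of a cycle `C_{q-1}`. -/
def wheelGraph (q : ℕ) : SimpleGraph (Unit ⊕ Fin (q - 1)) :=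
  graphJoin (⊥ : SimpleGraph Unit) (cycleGraph (q - 1))

/-- The star `S_{k+1}` with `k` leaves: a hub joined to `k` independent vertices. -/
def starGraph (k : ℕ) : SimpleGraph (Unit ⊕ Fin k) :=
  graphJoin (⊥ : SimpleGraph Unit) (⊥ : SimpleGraph (Fin k))

/-- `m` pairwise vertex-disjoint copies of `H`. -/
def disjointCopies (m : ℕ) {V : Type*} (H : SimpleGraph V) : SimpleGraph (Fin m × V) :=
  SimpleGraph.fromRel (fun u v => u.1 = v.1 ∧ H.Adj u.2 v.2)

/-- The disjoint union of the family of graphs `G i`. -/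
def disjointSigma {ι : Type*} {V : ι → Type*} (G : ∀ i, SimpleGraph (V i)) :
    SimpleGraph (Σ i, V i) :=
  SimpleGraph.fromRel (fun u v => ∃ h : u.1 = v.1, (G v.1).Adj (h ▸ u.2) v.2)

/-- The Turán number `ex(n, H)`: the maximum number of edges of an `H`-free graph
on `n` vertices. -/
noncomputable def exNum {β : Type*} (n : ℕ) (H : SimpleGraph β) : ℕ :=
  sSup {e | ∃ G : SimpleGraph (Fin n), ¬ Contains G H ∧ Nat.card G.edgeSet = e}

section Extremal

open Finset
open scoped Classical

variable {V : Type*}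

/-! ### Embedding wheels one at a time -/

lemma contains_disjointSigma {ι : Type*} {W : ι → Type*} (H : ∀ i, SimpleGraph (W i))
    (G : SimpleGraph V) (f : ∀ i, W i → V)
    (hom : ∀ i a b, (H i).Adj a b → G.Adj (f i a) (f i b))
    (inj : ∀ i, Function.Injective (f i))
    (disj : ∀ i j, i ≠ j → ∀ a b, f i a ≠ f j b) :
    Contains G (disjointSigma H) := by
  refine ⟨⟨fun u => f u.1 u.2, ?_⟩, ?_⟩
  · rintro ⟨i, a⟩ ⟨j, b⟩ hab
    rw [disjointSigma, SimpleGraph.fromRel_adj] at hab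
    obtain ⟨-, ⟨h, hab⟩ | ⟨h, hab⟩⟩ := hab
    · dsimp only at h
      subst h
      exact hom _ _ _ hab
    · dsimp only at h
      subst h
      exact (hom _ _ _ hab).symm
  · rintro ⟨i, a⟩ ⟨j, b⟩ hab
    by_cases h : i = j
    · subst h
      exact congrArg _ (inj i hab)
    · exact absurd hab (disj i j h a b)

/-- A wheel can be read off from a hub `z` and a sequence `c` whose first `k - 1` terms run around
the rim. -/
lemma exists_wheel (G : SimpleGraph V) {k : ℕ} (hk : 4 ≤ k) (z : V) (c : ℕ → V)
    (inj : Set.InjOn c {j | j < k - 1})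
    (adj : ∀ j, j + 1 < k - 1 → G.Adj (c j) (c (j + 1)))
    (last : G.Adj (c (k - 2)) (c 0)) (hub : ∀ j < k - 1, G.Adj z (c j)) :
    ∃ f : Unit ⊕ Fin (k - 1) → V,
      (∀ a b, (wheelGraph k).Adj a b → G.Adj (f a) (f b)) ∧ Function.Injective f ∧
      ∀ a, f a = z ∨ ∃ j < k - 1, f a = c j := by
  have key : ∀ a b : Fin (k - 1), (a - b).val = 1 → G.Adj (c b) (c a) := by
    intro a b hab
    rw [Fin.sub_def] at hab
    simp only at hab
    have ha := a.2
    have hb := b.2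
    by_cases h : (a : ℕ) = b + 1
    · rw [h]; exact adj b (by omega)
    · have h2 : (a : ℕ) = 0 ∧ (b : ℕ) = k - 2 := by
        rcases lt_or_ge ((k - 1 - b + a : ℕ)) (k - 1) with h3 | h3
        · rw [Nat.mod_eq_of_lt h3] at hab; omega
        · rw [Nat.mod_eq_sub_mod h3, Nat.mod_eq_of_lt (by omega)] at hab; omega
      rw [h2.1, h2.2]; exact last
  refine ⟨Sum.elim (fun _ => z) (fun j => c j), ?_, ?_, ?_⟩
  · rintro (a | a) (b | b) hab <;>
      simp only [wheelGraph, graphJoin, SimpleGraph.fromRel_adj] at hab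
    · simp at hab
    · exact hub b b.2
    · exact (hub a a.2).symm
    · have h1 : (cycleGraph (k - 1)).Adj a b := hab.2.elim id SimpleGraph.Adj.symm
      rw [SimpleGraph.cycleGraph_adj'] at h1
      rcases h1 with h1 | h1
      · exact (key _ _ h1).symm
      · exact key _ _ h1
  · rintro (a | a) (b | b) hab
    · rfl
    · exact absurd hab (hub b b.2).ne
    · exact absurd hab (hub a a.2).ne'
    · simp only [Sum.elim_inr] at hab
      exact congrArg _ (Fin.ext (inj a.2 b.2 hab))
  · rintro (a | a)
    · exact Or.inl rfl
    · exact Or.inr ⟨a, a.2, rfl⟩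

/-- Graphs that can each be embedded around their own seed while avoiding any small set can be
embedded simultaneously and disjointly. Each new embedding avoids the previous ones and the
seeds still to be used. -/
lemma greedy [Nonempty V] {m : ℕ} {W : Fin m → Type} [∀ i, Fintype (W i)]
    (H : ∀ i, SimpleGraph (W i)) (G : SimpleGraph V) (s : Fin m → Finset V) (K : ℕ)
    (hK : ∑ i, (Fintype.card (W i) + #(s i)) ≤ K)
    (hs : ∀ i j, i ≠ j → Disjoint (s i) (s j))
    (hex : ∀ i, ∀ F : Finset V, #F ≤ K → Disjoint F (s i) → ∃ f : W i → V,
      (∀ a b, (H i).Adj a b → G.Adj (f a) (f b)) ∧ Function.Injective f ∧ ∀ a, f a ∉ F) :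
    Contains G (disjointSigma H) := by
  have main : ∀ T : Finset (Fin m), ∃ f : ∀ i, W i → V,
      (∀ i ∈ T, ∀ a b, (H i).Adj a b → G.Adj (f i a) (f i b)) ∧
      (∀ i ∈ T, Function.Injective (f i)) ∧
      (∀ i ∈ T, ∀ j ∈ T, i ≠ j → ∀ a b, f i a ≠ f j b) ∧
      (∀ i ∈ T, ∀ j ∉ T, ∀ a, f i a ∉ s j) := by
    intro T
    induction T using Finset.induction_on with
    | empty => exact ⟨fun _ _ => Classical.arbitrary V, by simp⟩
    | insert i T hi ih =>
      obtain ⟨f, h1, h2, h3, h4⟩ := ih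
      let F : Finset V := (T.biUnion fun j => univ.image (f j)) ∪ ((univ.erase i).biUnion s)
      have hF : #F ≤ K := by
        refine (card_union_le _ _).trans (le_trans ?_ hK)
        rw [sum_add_distrib]
        refine add_le_add (card_biUnion_le.trans ?_) (card_biUnion_le.trans ?_)
        · exact (sum_le_sum fun j _ => card_image_le).trans
            (sum_le_sum_of_subset (subset_univ T))
        · exact sum_le_sum_of_subset (subset_univ _)
      have hd : Disjoint F (s i) := by
        rw [disjoint_union_left, disjoint_biUnion_left, disjoint_biUnion_left]
        refine ⟨fun j hj => ?_, fun j hj => hs j i (ne_of_mem_erase hj)⟩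
        rw [Finset.disjoint_left]
        intro x hx
        obtain ⟨a, -, rfl⟩ := mem_image.1 hx
        exact h4 j hj i hi a
      obtain ⟨g, g1, g2, g3⟩ := hex i F hF hd
      have gT : ∀ j ∈ T, ∀ a b, f j a ≠ g b := by
        intro j hj a b hab
        refine g3 b (mem_union_left _ (mem_biUnion.2 ⟨j, hj, ?_⟩))
        rw [← hab]; exact mem_image_of_mem _ (mem_univ _)
      have gs : ∀ j, j ≠ i → ∀ b, g b ∉ s j := fun j hj b hb =>
        g3 b (mem_union_right _ (mem_biUnion.2 ⟨j, mem_erase.2 ⟨hj, mem_univ _⟩, hb⟩))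
      have hup : ∀ j ∈ T, Function.update f i g j = f j := fun j hj =>
        Function.update_of_ne (by rintro rfl; exact hi hj) _ _
      refine ⟨Function.update f i g, ?_, ?_, ?_, ?_⟩
      · intro j hj
        obtain rfl | hj' := mem_insert.1 hj
        · rw [Function.update_self]; exact g1
        · rw [hup j hj']; exact h1 j hj'
      · intro j hj
        obtain rfl | hj' := mem_insert.1 hj
        · rw [Function.update_self]; exact g2
        · rw [hup j hj']; exact h2 j hj'
      · intro j hj l hl hjl
        by_cases hji : j = i <;> by_cases hli : l = i
        · exact absurd (hji.trans hli.symm) hjl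
        · subst hji
          have hl' := mem_of_mem_insert_of_ne hl hli
          rw [Function.update_self, hup l hl']; exact fun a b => (gT l hl' b a).symm
        · subst hli
          have hj' := mem_of_mem_insert_of_ne hj hji
          rw [Function.update_self, hup j hj']; exact fun a b => gT j hj' a b
        · have hl' := mem_of_mem_insert_of_ne hl hli
          have hj' := mem_of_mem_insert_of_ne hj hji
          rw [hup j hj', hup l hl']; exact h3 j hj' l hl' hjl
      · intro j hj l hl
        rw [mem_insert, not_or] at hl
        obtain rfl | hj' := mem_insert.1 hj
        · rw [Function.update_self]; exact gs l hl.1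
        · rw [hup j hj']; exact h4 j hj' l hl.2
  obtain ⟨f, h1, h2, h3, -⟩ := main univ
  exact contains_disjointSigma H G f (fun i => h1 i (mem_univ i)) (fun i => h2 i (mem_univ i))
    (fun i j => h3 i (mem_univ i) j (mem_univ j))

/-! ### Neighbours inside a set, and picking complete tripartite pieces -/

/-- The number of neighbours of `v` in `A`. -/
noncomputable def nadj (G : SimpleGraph V) (v : V) (A : Finset V) : ℕ := #{w ∈ A | G.Adj v w}

/-- The number of non-neighbours of `v` in `A`; it counts `v` itself when `v ∈ A`. -/
noncomputable def nnon (G : SimpleGraph V) (v : V) (A : Finset V) : ℕ := #{w ∈ A | ¬ G.Adj v w}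

lemma nadj_add_nnon (G : SimpleGraph V) (v : V) (A : Finset V) :
    nadj G v A + nnon G v A = #A := card_filter_add_card_filter_not _

lemma nnon_mono (G : SimpleGraph V) (v : V) {A B : Finset V} (h : A ⊆ B) :
    nnon G v A ≤ nnon G v B := card_le_card (filter_subset_filter _ h)

lemma nadj_mono (G : SimpleGraph V) (v : V) {A B : Finset V} (h : A ⊆ B) :
    nadj G v A ≤ nadj G v B := card_le_card (filter_subset_filter _ h)

/-- A large set contains `q` common neighbours of a small set `T` whose members miss few of its
vertices. -/
lemma pick_set [Nonempty V] (G : SimpleGraph V) (X T : Finset V) (q d : ℕ)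
    (hT : ∀ v ∈ T, nnon G v X ≤ d) (hX : q + #T * d ≤ #X) :
    ∃ b : ℕ → V, (∀ j < q, b j ∈ X ∧ ∀ v ∈ T, G.Adj v (b j)) ∧ Set.InjOn b {j | j < q} := by
  set Y := X.filter (fun w => ∀ v ∈ T, G.Adj v w) with hY
  have h1 : X \ Y ⊆ T.biUnion (fun v => X.filter (fun w => ¬ G.Adj v w)) := by
    intro w hw
    simp only [hY, mem_sdiff, mem_filter, not_and, not_forall] at hw
    obtain ⟨v, hv, hvw⟩ := hw.2 hw.1
    exact mem_biUnion.2 ⟨v, hv, mem_filter.2 ⟨hw.1, hvw⟩⟩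
  have h2 : #(X \ Y) ≤ #T * d :=
    (card_le_card h1).trans (card_biUnion_le_card_mul _ _ _ hT)
  have h3 : q ≤ #Y := by
    have := card_sdiff_add_card_eq_card (filter_subset (fun w => ∀ v ∈ T, G.Adj v w) X)
    rw [← hY] at this
    omega
  let b : ℕ → V := fun j => if h : j < #Y then Y.equivFin.symm ⟨j, h⟩ else Classical.arbitrary V
  have hb : ∀ j (h : j < q), b j = Y.equivFin.symm ⟨j, h.trans_le h3⟩ := fun j h =>
    dif_pos (h.trans_le h3)
  refine ⟨b, fun j hj => ?_, fun i hi j hj hij => ?_⟩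
  · rw [hb j hj]
    have := (Y.equivFin.symm ⟨j, hj.trans_le h3⟩).2
    exact mem_filter.1 this
  · rw [hb i hi, hb j hj] at hij
    simpa using hij

/-- Three large sets with few missing edges between them contain a complete tripartite graph
with parts of size `q`. -/
lemma pick_tripartite [Nonempty V] (G : SimpleGraph V) (X Y Z : Finset V) (q d : ℕ)
    (hX : q ≤ #X) (hY : q + q * d ≤ #Y) (hZ : q + 2 * q * d ≤ #Z)
    (hXY : ∀ v ∈ X, nnon G v Y ≤ d) (hXZ : ∀ v ∈ X, nnon G v Z ≤ d)
    (hYZ : ∀ v ∈ Y, nnon G v Z ≤ d) :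
    ∃ a b c : ℕ → V, (∀ j < q, a j ∈ X) ∧ (∀ j < q, b j ∈ Y) ∧ (∀ j < q, c j ∈ Z) ∧
      Set.InjOn a {j | j < q} ∧ Set.InjOn b {j | j < q} ∧ Set.InjOn c {j | j < q} ∧
      (∀ j < q, ∀ l < q, G.Adj (a j) (b l)) ∧ (∀ j < q, ∀ l < q, G.Adj (a j) (c l)) ∧
      (∀ j < q, ∀ l < q, G.Adj (b j) (c l)) := by
  obtain ⟨a, a1, a2⟩ := pick_set G X ∅ q 0 (by simp) (by simpa using hX)
  have ca : ∀ a : ℕ → V, #((range q).image a) ≤ q := fun a =>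
    card_image_le.trans (card_range q).le
  obtain ⟨b, b1, b2⟩ := pick_set G Y ((range q).image a) q d
    (by
      intro v hv
      obtain ⟨j, hj, rfl⟩ := mem_image.1 hv
      exact hXY _ (a1 j (mem_range.1 hj)).1)
    (le_trans (by gcongr; exact ca a) hY)
  obtain ⟨c, c1, c2⟩ := pick_set G Z ((range q).image a ∪ (range q).image b) q d
    (by
      intro v hv
      rcases mem_union.1 hv with hv | hv <;> obtain ⟨j, hj, rfl⟩ := mem_image.1 hv
      · exact hXZ _ (a1 j (mem_range.1 hj)).1
      · exact hYZ _ (b1 j (mem_range.1 hj)).1)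
    (le_trans (by
      have := (card_union_le ((range q).image a) ((range q).image b)).trans
        (add_le_add (ca a) (ca b))
      rw [← two_mul] at this
      gcongr) hZ)
  refine ⟨a, b, c, fun j hj => (a1 j hj).1, fun j hj => (b1 j hj).1, fun j hj => (c1 j hj).1,
    a2, b2, c2, fun j hj l hl => ?_, fun j hj l hl => ?_, fun j hj l hl => ?_⟩
  · exact (b1 l hl).2 _ (mem_image_of_mem _ (mem_range.2 hj))
  · exact (c1 l hl).2 _ (mem_union_left _ (mem_image_of_mem _ (mem_range.2 hj)))
  · exact (c1 l hl).2 _ (mem_union_right _ (mem_image_of_mem _ (mem_range.2 hj)))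

/-- The wheel with hub `z` whose rim starts with `x, y` and then alternates between two
completely joined sequences `p` (even positions) and `q` (odd positions). -/
lemma alt_wheel (G : SimpleGraph V) {k : ℕ} (hk : 4 ≤ k) (F : Finset V) (z x y : V) (p q : ℕ → V)
    (hp : Set.InjOn p {j | j < k}) (hq : Set.InjOn q {j | j < k})
    (hpq : ∀ j < k, ∀ l < k, G.Adj (p j) (q l)) (hxy : G.Adj x y)
    (hyp : ∀ j < k, G.Adj y (p j))
    (hl : Even k → G.Adj (p (k - 2)) x) (hl' : ¬ Even k → G.Adj (q (k - 2)) x)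
    (hxp : ∀ j < k, 2 ≤ j → x ≠ p j) (hxq : ∀ j < k, 2 ≤ j → x ≠ q j)
    (hyq : ∀ j < k, 2 ≤ j → y ≠ q j)
    (hzx : G.Adj z x) (hzy : G.Adj z y) (hzp : ∀ j < k, G.Adj z (p j))
    (hzq : ∀ j < k, G.Adj z (q j))
    (zF : z ∉ F) (xF : x ∉ F) (yF : y ∉ F) (pF : ∀ j < k, p j ∉ F) (qF : ∀ j < k, q j ∉ F) :
    ∃ f : Unit ⊕ Fin (k - 1) → V,
      (∀ a b, (wheelGraph k).Adj a b → G.Adj (f a) (f b)) ∧ Function.Injective f ∧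
      ∀ a, f a ∉ F := by
  let c : ℕ → V := fun j => if j = 0 then x else if j = 1 then y else if Even j then p j else q j
  have c0 : c 0 = x := rfl
  have c1 : c 1 = y := rfl
  have ce : ∀ j, 2 ≤ j → Even j → c j = p j := by
    intro j h1 h2
    simp only [c]
    rw [if_neg (by omega), if_neg (by omega), if_pos h2]
  have co : ∀ j, 2 ≤ j → ¬ Even j → c j = q j := by
    intro j h1 h2
    simp only [c]
    rw [if_neg (by omega), if_neg (by omega), if_neg h2]
  have cases : ∀ j < k - 1, (j = 0 ∧ c j = x) ∨ (j = 1 ∧ c j = y) ∨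
      (2 ≤ j ∧ Even j ∧ c j = p j) ∨ (2 ≤ j ∧ ¬ Even j ∧ c j = q j) := by
    intro j hj
    by_cases h0 : j = 0
    · subst h0; exact Or.inl ⟨rfl, c0⟩
    by_cases h1 : j = 1
    · subst h1; exact Or.inr (Or.inl ⟨rfl, c1⟩)
    by_cases h2 : Even j
    · exact Or.inr (Or.inr (Or.inl ⟨by omega, h2, ce j (by omega) h2⟩))
    · exact Or.inr (Or.inr (Or.inr ⟨by omega, h2, co j (by omega) h2⟩))
  have hinj : Set.InjOn c {j | j < k - 1} := by
    have key : ∀ i j, i < j → j < k - 1 → c i ≠ c j := by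
      intro i j hij hj
      have hi : i < k - 1 := by omega
      rcases cases i hi with h | h | h | h <;> rcases cases j hj with h' | h' | h' | h'
      · omega
      · rw [h.2, h'.2]; exact hxy.ne
      · rw [h.2, h'.2.2]; exact hxp j (by omega) h'.1
      · rw [h.2, h'.2.2]; exact hxq j (by omega) h'.1
      · omega
      · omega
      · rw [h.2, h'.2.2]; exact (hyp j (by omega)).ne
      · rw [h.2, h'.2.2]; exact hyq j (by omega) h'.1
      · omega
      · omega
      · rw [h.2.2, h'.2.2]
        intro e
        exact hij.ne (hp (show i < k by omega) (show j < k by omega) e)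
      · rw [h.2.2, h'.2.2]; exact (hpq _ (by omega) _ (by omega)).ne
      · omega
      · omega
      · rw [h.2.2, h'.2.2]; exact (hpq _ (by omega) _ (by omega)).ne'
      · rw [h.2.2, h'.2.2]
        intro e
        exact hij.ne (hq (show i < k by omega) (show j < k by omega) e)
    intro i hi j hj hij
    rcases lt_trichotomy i j with h | h | h
    · exact absurd hij (key i j h hj)
    · exact h
    · exact absurd hij.symm (key j i h hi)
  have hadj : ∀ j, j + 1 < k - 1 → G.Adj (c j) (c (j + 1)) := by
    intro j hj
    rcases cases j (by omega) with h | h | h | h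
    · rw [h.2, h.1, zero_add, c1]; exact hxy
    · rw [h.2, h.1, ce 2 (by omega) (by decide)]; exact hyp 2 (by omega)
    · rw [h.2.2, co (j + 1) (by omega) (by rw [Nat.even_add_one]; exact not_not.2 h.2.1)]
      exact hpq _ (by omega) _ (by omega)
    · rw [h.2.2, ce (j + 1) (by omega) (by rw [Nat.even_add_one]; exact h.2.1)]
      exact (hpq _ (by omega) _ (by omega)).symm
  have hlast : G.Adj (c (k - 2)) (c 0) := by
    rw [c0]
    have he : Even (k - 2) ↔ Even k := by
      rw [Nat.even_sub (by omega)]; simp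
    by_cases h : Even k
    · rw [ce (k - 2) (by omega) (he.2 h)]; exact hl h
    · rw [co (k - 2) (by omega) (fun h' => h (he.1 h'))]; exact hl' h
  have hhub : ∀ j < k - 1, G.Adj z (c j) := by
    intro j hj
    rcases cases j (by omega) with h | h | h | h
    · rwa [h.2]
    · rwa [h.2]
    · rw [h.2.2]; exact hzp j (by omega)
    · rw [h.2.2]; exact hzq j (by omega)
  obtain ⟨f, f1, f2, f3⟩ := exists_wheel G hk z c hinj hadj hlast hhub
  refine ⟨f, f1, f2, fun a => ?_⟩
  rcases f3 a with h | ⟨j, hj, h⟩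
  · rwa [h]
  · rw [h]
    rcases cases j hj with h | h | h | h
    · rwa [h.2]
    · rwa [h.2]
    · rw [h.2.2]; exact pF j (by omega)
    · rw [h.2.2]; exact qF j (by omega)

/-! ### Seeds of even wheels -/

/-- A seed of an even wheel over the almost completely joined sets `A 0, A 1, A 2`: either a single
vertex with at least `D` neighbours in each `A i`, or an edge `xy` such that for some `i` both ends
miss at most `d'` vertices of the two sets `A j` with `j ≠ i`. -/
def IsSeed (G : SimpleGraph V) (A : Fin 3 → Finset V) (D d' : ℕ) (s : Finset V) : Prop :=
  (∃ v, s = {v} ∧ ∀ i, D ≤ nadj G v (A i)) ∨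
  ∃ x y i, s = {x, y} ∧ G.Adj x y ∧ ∀ j ≠ i, nnon G x (A j) ≤ d' ∧ nnon G y (A j) ≤ d'

/-- A maximal matching of the relation `R`: its members are pairwise disjoint pairs, and its
support meets every related pair. -/
lemma exists_matching [Fintype V] (R : V → V → Prop) :
    ∃ M : Finset (Finset V), (∀ s ∈ M, ∃ x y, s = {x, y} ∧ R x y) ∧
      (∀ s ∈ M, ∀ t ∈ M, s ≠ t → Disjoint s t) ∧
      ∀ x y, R x y → ∃ s ∈ M, x ∈ s ∨ y ∈ s := by
  let P : Finset (Finset V) → Prop := fun M =>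
    (∀ s ∈ M, ∃ x y, s = {x, y} ∧ R x y) ∧ ∀ s ∈ M, ∀ t ∈ M, s ≠ t → Disjoint s t
  obtain ⟨M, hM, hmax⟩ := exists_max_image (univ.filter P) card
    ⟨∅, by simp [P]⟩
  have hP : P M := (mem_filter.1 hM).2
  refine ⟨M, hP.1, hP.2, fun x y hxy => ?_⟩
  by_contra! hcon
  have hdis : ∀ s ∈ M, Disjoint s {x, y} := by
    intro s hs
    rw [Finset.disjoint_right]
    intro z hz
    rcases mem_insert.1 hz with rfl | hz
    · exact (hcon s hs).1
    · rw [mem_singleton.1 hz]; exact (hcon s hs).2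
  have hnot : ({x, y} : Finset V) ∉ M := fun h => (hcon _ h).1 (by simp)
  have hP' : P (insert {x, y} M) := by
    refine ⟨fun s hs => ?_, fun s hs t ht hst => ?_⟩
    · rcases mem_insert.1 hs with rfl | hs
      · exact ⟨x, y, rfl, hxy⟩
      · exact hP.1 s hs
    · rcases mem_insert.1 hs with rfl | hs <;> rcases mem_insert.1 ht with rfl | ht
      · exact absurd rfl hst
      · exact (hdis t ht).symm
      · exact hdis s hs
      · exact hP.2 s hs t ht hst
  have := hmax _ (mem_filter.2 ⟨mem_univ _, hP'⟩)
  rw [card_insert_of_notMem hnot] at this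
  omega

section Seeds

variable [Nonempty V] (G : SimpleGraph V) (A : Fin 3 → Finset V) {K d d' : ℕ}

lemma odd_wheel {k : ℕ} (hk : 4 ≤ k) (hkK : k ≤ K)
    (core : ∀ i j, i ≠ j → ∀ v ∈ A i, nnon G v (A j) ≤ d)
    (size : ∀ i, 2 * d' + 3 * K * (d + 1) ≤ #(A i)) (hodd : ¬ Even k)
    (F : Finset V) (hF : #F ≤ K) :
    ∃ f : Unit ⊕ Fin (k - 1) → V,
      (∀ a b, (wheelGraph k).Adj a b → G.Adj (f a) (f b)) ∧ Function.Injective f ∧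
      ∀ a, f a ∉ F := by
  have hs : ∀ i, K + 2 * K * d ≤ #(A i \ F) := by
    intro i
    have h1 := le_card_sdiff F (A i)
    have h2 := size i
    have h3 : 3 * K * (d + 1) = 3 * K + 3 * (K * d) := by ring
    have h4 : 2 * K * d = 2 * (K * d) := by ring
    omega
  have hc : ∀ i j, i ≠ j → ∀ v ∈ A i \ F, nnon G v (A j \ F) ≤ d := fun i j hij v hv =>
    (nnon_mono G v sdiff_subset).trans (core i j hij v (mem_sdiff.1 hv).1)
  have h0 := hs 0
  have h1 := hs 1
  have h2 := hs 2
  have h4 : 2 * K * d = 2 * (K * d) := by ring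
  obtain ⟨a, b, c, ha, hb, hc, ia, ib, ic, hab, hac, hbc⟩ :=
    pick_tripartite G (A 0 \ F) (A 1 \ F) (A 2 \ F) K d (by omega) (by omega) h2
      (hc 0 1 (by decide)) (hc 0 2 (by decide)) (hc 1 2 (by decide))
  have sub : {j | j < k} ⊆ {j | j < K} := fun j (hj : j < k) => hj.trans_le hkK
  refine alt_wheel G hk F (a 0) (b 0) (c 1) b c (ib.mono sub) (ic.mono sub)
    (fun j hj l hl => hbc j (by omega) l (by omega)) (hbc 0 (by omega) 1 (by omega))
    (fun j hj => (hbc j (by omega) 1 (by omega)).symm) (fun h => absurd h hodd)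
    (fun _ => (hbc 0 (by omega) _ (by omega)).symm)
    (fun j hj hj2 h => ?_) (fun j hj _ => (hbc 0 (by omega) j (by omega)).ne)
    (fun j hj hj2 h => ?_)
    (hab 0 (by omega) 0 (by omega)) (hac 0 (by omega) 1 (by omega))
    (fun j hj => hab 0 (by omega) j (by omega)) (fun j hj => hac 0 (by omega) j (by omega))
    (mem_sdiff.1 (ha 0 (by omega))).2 (mem_sdiff.1 (hb 0 (by omega))).2
    (mem_sdiff.1 (hc 1 (by omega))).2 (fun j hj => (mem_sdiff.1 (hb j (by omega))).2)
    (fun j hj => (mem_sdiff.1 (hc j (by omega))).2)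
  · have := ib (show 0 < K by omega) (show j < K by omega) h
    omega
  · have := ic (show 1 < K by omega) (show j < K by omega) h
    omega

lemma even_wheel {k : ℕ} (hk : 4 ≤ k) (hkK : k ≤ K)
    (core : ∀ i j, i ≠ j → ∀ v ∈ A i, nnon G v (A j) ≤ d)
    (size : ∀ i, 2 * d' + 3 * K * (d + 1) ≤ #(A i)) (heven : Even k)
    (s : Finset V) (hs : IsSeed G A (3 * K * (d + 1)) d' s)
    (F : Finset V) (hF : #F ≤ K) (hd : Disjoint F s) :
    ∃ f : Unit ⊕ Fin (k - 1) → V,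
      (∀ a b, (wheelGraph k).Adj a b → G.Adj (f a) (f b)) ∧ Function.Injective f ∧
      ∀ a, f a ∉ F := by
  have h3 : 3 * K * (d + 1) = 3 * K + 3 * (K * d) := by ring
  have h4 : 2 * K * d = 2 * (K * d) := by ring
  have sub : {j | j < k} ⊆ {j | j < K} := fun j (hj : j < k) => hj.trans_le hkK
  rcases hs with ⟨v, rfl, hv⟩ | ⟨x, y, i, rfl, hxy, hi⟩
  · -- The vertex `v` becomes the hub and the rim lies in its neighbourhood.
    have vF : v ∉ F := by simpa using hd
    let X : Fin 3 → Finset V := fun i => {w ∈ A i | G.Adj v w} \ F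
    have hX : ∀ i, K + 2 * K * d ≤ #(X i) := by
      intro i
      have h1 := le_card_sdiff F {w ∈ A i | G.Adj v w}
      have h2 : 3 * K * (d + 1) ≤ #{w ∈ A i | G.Adj v w} := hv i
      change _ ≤ #({w ∈ A i | G.Adj v w} \ F)
      omega
    have hXA : ∀ i, X i ⊆ A i := fun i => sdiff_subset.trans (filter_subset _ _)
    have hXF : ∀ i, ∀ w ∈ X i, w ∉ F := fun i w hw => (mem_sdiff.1 hw).2
    have hXv : ∀ i, ∀ w ∈ X i, G.Adj v w := fun i w hw => (mem_filter.1 (mem_sdiff.1 hw).1).2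
    have hc : ∀ i j, i ≠ j → ∀ v ∈ X i, nnon G v (X j) ≤ d := fun i j hij v hv =>
      (nnon_mono G v (hXA j)).trans (core i j hij v (hXA i hv))
    have h0 := hX 0
    have h1 := hX 1
    obtain ⟨a, b, c, ha, hb, hc, ia, ib, ic, hab, hac, hbc⟩ :=
      pick_tripartite G (X 0) (X 1) (X 2) K d (by omega) (by omega) (hX 2)
        (hc 0 1 (by decide)) (hc 0 2 (by decide)) (hc 1 2 (by decide))
    refine alt_wheel G hk F v (a 0) (b 1) c b (ic.mono sub) (ib.mono sub)
      (fun j hj l hl => (hbc l (by omega) j (by omega)).symm) (hab 0 (by omega) 1 (by omega))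
      (fun j hj => hbc 1 (by omega) j (by omega))
      (fun _ => (hac 0 (by omega) _ (by omega)).symm) (fun h => absurd heven h)
      (fun j hj _ => (hac 0 (by omega) j (by omega)).ne)
      (fun j hj _ => (hab 0 (by omega) j (by omega)).ne)
      (fun j hj hj2 h => ?_)
      (hXv _ _ (ha 0 (by omega))) (hXv _ _ (hb 1 (by omega)))
      (fun j hj => hXv _ _ (hc j (by omega))) (fun j hj => hXv _ _ (hb j (by omega)))
      vF (hXF _ _ (ha 0 (by omega))) (hXF _ _ (hb 1 (by omega)))
      (fun j hj => hXF _ _ (hc j (by omega))) (fun j hj => hXF _ _ (hb j (by omega)))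
    have := ib (show 1 < K by omega) (show j < K by omega) h
    omega
  · -- The edge `xy` lies on the rim, which continues through the sets `A l` and `A i`; the hub
    -- is in `A j`.
    have hjl : ∀ i : Fin 3, ∃ j l, j ≠ i ∧ l ≠ i ∧ j ≠ l := by decide
    obtain ⟨j, l, hji, hli, hjl⟩ := hjl i
    have xF : x ∉ F := fun h => (Finset.disjoint_left.1 hd h) (by simp)
    have yF : y ∉ F := fun h => (Finset.disjoint_left.1 hd h) (by simp)
    let N : Fin 3 → Finset V := fun j =>
      ((A j \ (A j).filter (fun w => ¬ G.Adj x w)) \ (A j).filter (fun w => ¬ G.Adj y w)) \ F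
    have hN : ∀ j ≠ i, K + 2 * K * d ≤ #(N j) := by
      intro j hj
      have e1 := le_card_sdiff ((A j).filter (fun w => ¬ G.Adj x w)) (A j)
      have e2 := le_card_sdiff ((A j).filter (fun w => ¬ G.Adj y w))
        (A j \ (A j).filter (fun w => ¬ G.Adj x w))
      have e3 := le_card_sdiff F ((A j \ (A j).filter (fun w => ¬ G.Adj x w)) \
        (A j).filter (fun w => ¬ G.Adj y w))
      have e4 : #((A j).filter (fun w => ¬ G.Adj x w)) ≤ d' := (hi j hj).1
      have e5 : #((A j).filter (fun w => ¬ G.Adj y w)) ≤ d' := (hi j hj).2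
      have e6 := size j
      change _ ≤ #(((A j \ (A j).filter (fun w => ¬ G.Adj x w)) \
        (A j).filter (fun w => ¬ G.Adj y w)) \ F)
      omega
    have hNp : ∀ j, ∀ w ∈ N j, w ∈ A j ∧ G.Adj x w ∧ G.Adj y w ∧ w ∉ F := by
      intro j w hw
      simp only [N, mem_sdiff, mem_filter, not_and, not_not] at hw
      tauto
    have hNA : ∀ j, N j ⊆ A j := fun j w hw => (hNp j w hw).1
    let Y : Finset V := A i \ (F ∪ {x, y})
    have hY : K + 2 * K * d ≤ #Y := by
      have e1 := le_card_sdiff (F ∪ {x, y}) (A i)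
      have e2 := card_union_le F {x, y}
      have e3 : #({x, y} : Finset V) ≤ 2 := card_le_two
      have e4 := size i
      change _ ≤ #(A i \ (F ∪ {x, y}))
      omega
    have hYp : ∀ w ∈ Y, w ∈ A i ∧ w ∉ F ∧ w ≠ x ∧ w ≠ y := by
      intro w hw
      simp only [Y, mem_sdiff, mem_union, mem_insert, mem_singleton, not_or] at hw
      exact ⟨hw.1, hw.2.1, hw.2.2⟩
    have hYA : Y ⊆ A i := sdiff_subset
    have hNj := hN j hji
    have hNl := hN l hli
    obtain ⟨a, b, c, ha, hb, hc, ia, ib, ic, hab, hac, hbc⟩ :=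
      pick_tripartite G (N j) (N l) Y K d (by omega) (by omega) hY
        (fun v hv => (nnon_mono G v (hNA l)).trans (core j l hjl v (hNA j hv)))
        (fun v hv => (nnon_mono G v hYA).trans (core j i hji v (hNA j hv)))
        (fun v hv => (nnon_mono G v hYA).trans (core l i hli v (hNA l hv)))
    have hbp : ∀ n < k, b n ∈ A l ∧ G.Adj x (b n) ∧ G.Adj y (b n) ∧ b n ∉ F := fun n hn =>
      hNp l _ (hb n (by omega))
    have hap : a 0 ∈ A j ∧ G.Adj x (a 0) ∧ G.Adj y (a 0) ∧ a 0 ∉ F := hNp j _ (ha 0 (by omega))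
    have hcp : ∀ n < k, c n ∈ A i ∧ c n ∉ F ∧ c n ≠ x ∧ c n ≠ y := fun n hn =>
      hYp _ (hc n (by omega))
    exact alt_wheel G hk F (a 0) x y b c (ib.mono sub) (ic.mono sub)
      (fun j hj l hl => hbc j (by omega) l (by omega)) hxy
      (fun j hj => (hbp j hj).2.2.1)
      (fun _ => (hbp _ (by omega)).2.1.symm) (fun h => absurd heven h)
      (fun j hj _ => (hbp j hj).2.1.ne)
      (fun j hj _ => (hcp j hj).2.2.1.symm) (fun j hj _ => (hcp j hj).2.2.2.symm)
      hap.2.1.symm hap.2.2.1.symm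
      (fun j hj => hab 0 (by omega) j (by omega)) (fun j hj => hac 0 (by omega) j (by omega))
      hap.2.2.2 xF yF (fun j hj => (hbp j hj).2.2.2) (fun j hj => (hcp j hj).2.1)

/-- As many disjoint seeds as there are even wheels give the whole union of wheels. -/
lemma contains_of_seeds {m : ℕ} (k : Fin m → ℕ) (hk : ∀ i, 4 ≤ k i)
    (hK : ∑ i, (k i + 2) ≤ K)
    (core : ∀ i j, i ≠ j → ∀ v ∈ A i, nnon G v (A j) ≤ d)
    (size : ∀ i, 2 * d' + 3 * K * (d + 1) ≤ #(A i))
    (S : Finset (Finset V)) (hS : ∀ s ∈ S, IsSeed G A (3 * K * (d + 1)) d' s)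
    (hdisj : ∀ s ∈ S, ∀ t ∈ S, s ≠ t → Disjoint s t)
    (hcard : #(univ.filter (fun i => Even (k i))) ≤ #S) :
    Contains G (disjointSigma (fun i => wheelGraph (k i))) := by
  obtain ⟨e⟩ : Nonempty ({i // Even (k i)} ↪ S) := by
    rw [Function.Embedding.nonempty_iff_card_le, Fintype.card_coe, Fintype.card_subtype]
    exact hcard
  let s : Fin m → Finset V := fun i => if h : Even (k i) then e ⟨i, h⟩ else ∅
  have hse : ∀ i (h : Even (k i)), s i = e ⟨i, h⟩ := fun i h => dif_pos h
  have hso : ∀ i, ¬ Even (k i) → s i = ∅ := fun i h => dif_neg h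
  have hs2 : ∀ i, #(s i) ≤ 2 := by
    intro i
    by_cases h : Even (k i)
    · rw [hse i h]
      rcases hS _ (e ⟨i, h⟩).2 with ⟨v, hv, -⟩ | ⟨x, y, j, hv, -⟩
      · rw [hv]; simp
      · rw [hv]; exact card_le_two
    · rw [hso i h]; simp
  refine greedy _ G s K ?_ ?_ ?_
  · refine le_trans (sum_le_sum fun i _ => ?_) hK
    have := hs2 i
    have := hk i
    simp only [Fintype.card_sum, Fintype.card_unit, Fintype.card_fin]
    omega
  · intro i j hij
    by_cases hi : Even (k i)
    · by_cases hj : Even (k j)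
      · rw [hse i hi, hse j hj]
        refine hdisj _ (e _).2 _ (e _).2 fun h => hij ?_
        simpa using e.injective (Subtype.ext h)
      · rw [hso j hj]; exact disjoint_empty_right _
    · rw [hso i hi]; exact disjoint_empty_left _
  · intro i F hF hd
    have hkK : k i ≤ K := by
      have := single_le_sum (f := fun i => k i + 2) (fun j _ => Nat.zero_le _) (mem_univ i)
      omega
    by_cases h : Even (k i)
    · rw [hse i h] at hd
      exact even_wheel G A (hk i) hkK core size h _ (hS _ (e ⟨i, h⟩).2) F hF hd
    · exact odd_wheel G A (hk i) hkK core size h F hF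

/-- In a graph without the union of wheels, the vertices `B` with many neighbours in every `A i`
and the edges inside the classes of vertices almost complete to the other two sets compete for
fewer than `h` disjoint seeds; hence those edges are covered by a small set `S`. -/
lemma exists_cover [Fintype V] {m : ℕ} (k : Fin m → ℕ) (hk : ∀ i, 4 ≤ k i)
    (hK : ∑ i, (k i + 2) ≤ K) {h : ℕ} (hh : h = #(univ.filter (fun i => Even (k i))))
    (hfree : ¬ Contains G (disjointSigma (fun i => wheelGraph (k i))))
    (core : ∀ i j, i ≠ j → ∀ v ∈ A i, nnon G v (A j) ≤ d)
    (size : ∀ i, 2 * d' + 3 * K * (d + 1) ≤ #(A i))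
    (B Z : Finset V) (cl : V → Fin 3) (hBZ : Disjoint B Z)
    (hB : ∀ v ∈ B, ∀ i, 3 * K * (d + 1) ≤ nadj G v (A i))
    (hZ : ∀ v ∈ Z, ∀ j ≠ cl v, nnon G v (A j) ≤ d') :
    ∃ S : Finset V, 2 * #B + #S + 2 ≤ 2 * h ∧
      ∀ x ∈ Z, ∀ y ∈ Z, cl x = cl y → G.Adj x y → x ∈ S ∨ y ∈ S := by
  obtain ⟨M, hM, hMd, hMc⟩ := exists_matching
    (fun x y => G.Adj x y ∧ x ∈ Z ∧ y ∈ Z ∧ cl x = cl y)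
  let B' : Finset (Finset V) := B.image singleton
  have hB' : #B' = #B := card_image_of_injective _ singleton_injective
  have hBM : ∀ s ∈ B', ∀ t ∈ M, Disjoint s t := by
    intro s hs t ht
    obtain ⟨v, hv, rfl⟩ := mem_image.1 hs
    obtain ⟨x, y, rfl, -, hx, hy, -⟩ := hM t ht
    rw [disjoint_singleton_left, mem_insert, mem_singleton]
    rintro (rfl | rfl)
    · exact Finset.disjoint_left.1 hBZ hv hx
    · exact Finset.disjoint_left.1 hBZ hv hy
  have hdisj : Disjoint B' M := by
    rw [Finset.disjoint_left]
    intro s hs ht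
    obtain ⟨v, hv, rfl⟩ := mem_image.1 hs
    simpa using hBM _ hs _ ht
  have hlt : #B + #M < h := by
    by_contra! hge
    refine hfree (contains_of_seeds G A k hk hK core size (B' ∪ M) ?_ ?_ ?_)
    · intro s hs
      rcases mem_union.1 hs with hs | hs
      · obtain ⟨v, hv, rfl⟩ := mem_image.1 hs
        exact Or.inl ⟨v, rfl, hB v hv⟩
      · obtain ⟨x, y, rfl, hxy, hx, hy, hc⟩ := hM s hs
        exact Or.inr ⟨x, y, cl x, rfl, hxy, fun j hj => ⟨hZ x hx j hj, hZ y hy j (hc ▸ hj)⟩⟩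
    · intro s hs t ht hst
      rcases mem_union.1 hs with hs | hs <;> rcases mem_union.1 ht with ht | ht
      · obtain ⟨v, hv, rfl⟩ := mem_image.1 hs
        obtain ⟨w, hw, rfl⟩ := mem_image.1 ht
        rw [disjoint_singleton]
        rintro rfl
        exact hst rfl
      · exact hBM s hs t ht
      · exact (hBM t ht s hs).symm
      · exact hMd s hs t ht hst
    · rw [card_union_of_disjoint hdisj, hB', ← hh]
      exact hge
  refine ⟨M.biUnion id, ?_, fun x hx y hy hc hxy => ?_⟩
  · have : #(M.biUnion id) ≤ #M * 2 := by
      refine card_biUnion_le_card_mul _ _ _ fun s hs => ?_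
      obtain ⟨x, y, rfl, -⟩ := hM s hs
      exact card_le_two
    omega
  · obtain ⟨s, hs, hxs⟩ := hMc x y ⟨hxy, hx, hy, hc⟩
    exact hxs.imp (fun h => mem_biUnion.2 ⟨s, hs, h⟩) (fun h => mem_biUnion.2 ⟨s, hs, h⟩)

end Seeds

/-! ### Counting edges -/

lemma sum_nadj_comm (G : SimpleGraph V) (A B : Finset V) :
    ∑ v ∈ A, nadj G v B = ∑ v ∈ B, nadj G v A := by
  simp only [nadj, card_filter]
  rw [sum_comm]
  simp only [G.adj_comm]

/-- The degree sum of `G`, that is, twice its number of edges. -/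
noncomputable def E2 [Fintype V] (G : SimpleGraph V) : ℕ := ∑ v, nadj G v univ

lemma nadj_le_card (G : SimpleGraph V) (v : V) (A : Finset V) : nadj G v A ≤ #A :=
  card_filter_le _ _

lemma nnon_le_card (G : SimpleGraph V) (v : V) (A : Finset V) : nnon G v A ≤ #A :=
  card_filter_le _ _

lemma nnon_union_of_disjoint (G : SimpleGraph V) (v : V) {A B : Finset V} (h : Disjoint A B) :
    nnon G v (A ∪ B) = nnon G v A + nnon G v B := by
  rw [nnon, filter_union, card_union_of_disjoint (disjoint_filter_filter h)]; rfl

/-- A graph of maximum degree `I` with a vertex cover `S` has at most `#S * I` edges. -/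
lemma E2_le_of_cover [Fintype V] (G : SimpleGraph V) (S : Finset V) (I : ℕ)
    (hI : ∀ v, nadj G v univ ≤ I) (hS : ∀ x y, G.Adj x y → x ∈ S ∨ y ∈ S) :
    E2 G ≤ 2 * #S * I := by
  have h1 : ∀ v, nadj G v univ ≤ nadj G v S + if v ∈ S then I else 0 := by
    intro v
    split_ifs with hv
    · exact (hI v).trans (Nat.le_add_left _ _)
    · refine card_le_card fun w hw => ?_
      rw [mem_filter] at hw ⊢
      exact ⟨(hS v w hw.2).resolve_left hv, hw.2⟩
  calc E2 G ≤ ∑ v, (nadj G v S + if v ∈ S then I else 0) := sum_le_sum fun v _ => h1 v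
    _ = ∑ v ∈ S, nadj G v univ + #S * I := by
      rw [sum_add_distrib, sum_nadj_comm]
      simp
    _ ≤ #S * I + #S * I := by
      gcongr
      exact sum_le_card_nsmul _ _ _ fun v _ => hI v
    _ = 2 * #S * I := by ring

/-- If the vertices outside `B` are split into three classes whose inner edges are covered by `S`
and inner degrees are at most `I`, then `G` has few edges. -/
lemma E2_le [Fintype V] (G : SimpleGraph V) (B S : Finset V) (cl : V → Fin 3) (I : ℕ)
    (hS : ∀ x ∉ B, ∀ y ∉ B, cl x = cl y → G.Adj x y → x ∈ S ∨ y ∈ S)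
    (hI : ∀ v ∉ B, nadj G v {w | w ∉ B ∧ cl w = cl v} ≤ I) :
    3 * E2 G ≤ 2 * Fintype.card V ^ 2 + 2 * #B * Fintype.card V + 6 * #S * I := by
  -- `G'` consists of the edges inside the classes.
  obtain ⟨G', hadj⟩ : ∃ G' : SimpleGraph V, ∀ x y, G'.Adj x y ↔
      G.Adj x y ∧ x ∉ B ∧ y ∉ B ∧ cl x = cl y :=
    ⟨{  Adj := fun x y => G.Adj x y ∧ x ∉ B ∧ y ∉ B ∧ cl x = cl y
        symm := ⟨fun x y h => ⟨h.1.symm, h.2.2.1, h.2.1, h.2.2.2.symm⟩⟩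
        loopless := ⟨fun x h => G.loopless.irrefl x h.1⟩ }, fun _ _ => Iff.rfl⟩
  have hG' : ∀ v ∉ B, nadj G' v univ = nadj G v {w | w ∉ B ∧ cl w = cl v} := by
    intro v hv
    rw [nadj, nadj]
    congr 1
    ext w
    rw [mem_filter, mem_filter, mem_filter, hadj, eq_comm (a := cl v)]
    tauto
  have hG'B : ∀ v ∈ B, nadj G' v univ = 0 := by
    intro v hv
    rw [nadj, card_eq_zero, filter_eq_empty_iff]
    exact fun w _ h => ((hadj v w).1 h).2.1 hv
  have hint : E2 G' ≤ 2 * #S * I := by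
    refine E2_le_of_cover G' S I (fun v => ?_) fun x y h => ?_
    by_cases hv : v ∈ B
    · rw [hG'B v hv]; exact Nat.zero_le _
    · rw [hG' v hv]; exact hI v hv
    · obtain ⟨h1, h2, h3, h4⟩ := (hadj x y).1 h
      exact hS x h2 y h3 h4 h1
  let a : Fin 3 → ℕ := fun i => #{w | w ∉ B ∧ cl w = i}
  set n := Fintype.card V with hn
  have hdeg : ∀ v, nadj G v univ + (if v ∈ B then 0 else a (cl v)) ≤ n + nadj G' v univ := by
    intro v
    split_ifs with hv
    · exact (nadj_le_card G v univ).trans (by rw [card_univ]; omega)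
    · have e1 := nadj_add_nnon G v univ
      have e2 := nadj_add_nnon G v {w | w ∉ B ∧ cl w = cl v}
      have e3 := nnon_mono G v (subset_univ {w | w ∉ B ∧ cl w = cl v})
      rw [hG' v hv]
      rw [card_univ] at e1
      change nadj G v univ + #{w | w ∉ B ∧ cl w = cl v} ≤ _
      omega
  have hsum : E2 G + ∑ v, (if v ∈ B then 0 else a (cl v)) ≤ n * n + E2 G' := by
    have := sum_le_sum fun v (_ : v ∈ (univ : Finset V)) => hdeg v
    rw [sum_add_distrib, sum_add_distrib, sum_const, card_univ, smul_eq_mul] at this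
    exact this
  have hsq : ∑ v, (if v ∈ B then 0 else a (cl v)) = ∑ i, a i * a i := by
    have : ∀ v, (if v ∈ B then 0 else a (cl v)) =
        ∑ i, if v ∉ B ∧ cl v = i then a i else 0 := by
      intro v
      by_cases hv : v ∈ B <;> simp [hv]
    simp only [this]
    rw [sum_comm]
    refine sum_congr rfl fun i _ => ?_
    rw [← sum_filter, sum_const, smul_eq_mul]
  have hcard : ∑ i, a i + #B = n := by
    have h1 : #(univ \ B) = ∑ i, #{w ∈ univ \ B | cl w = i} :=
      card_eq_sum_card_fiberwise fun w _ => mem_univ _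
    have h2 : ∀ i, a i = #{w ∈ univ \ B | cl w = i} := by
      intro i
      change #{w | w ∉ B ∧ cl w = i} = _
      congr 1
      ext w
      simp
    rw [sum_congr rfl fun i _ => h2 i, ← h1, hn, ← card_univ]
    exact card_sdiff_add_card_eq_card (subset_univ B)
  rw [Fin.sum_univ_three] at hsq hcard
  rw [hsq] at hsum
  rw [← hcard] at hsum ⊢
  have q1 := sq_nonneg ((a 0 : ℤ) - a 1)
  have q2 := sq_nonneg ((a 0 : ℤ) - a 2)
  have q3 := sq_nonneg ((a 1 : ℤ) - a 2)
  zify at hsum hint ⊢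
  nlinarith [sq_nonneg (#B : ℤ)]

/-! ### From a small complete tripartite graph to a rough partition -/

/-- A complete tripartite subgraph with parts of constant size determines a partition of all but a
small proportion of the vertices into three independent sets. -/
lemma exists_rough [Nonempty V] [Fintype V] (G : SimpleGraph V) {m : ℕ} (k : Fin m → ℕ)
    (hk : ∀ i, 4 ≤ k i) {K : ℕ} (hK0 : 1 ≤ K)
    (hK : ∑ i, (k i + 2) ≤ K) {h : ℕ} (hh : h = #(univ.filter (fun i => Even (k i))))
    (hfree : ¬ Contains G (disjointSigma (fun i => wheelGraph (k i))))
    (c M t : ℕ) (ht : t = 2 * (M * (3 * K)) + 3 * K)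
    (hn : t * (c + h) + 3 * h * M ≤ Fintype.card V)
    (hdeg : ∀ v, 2 * Fintype.card V ≤ 3 * nadj G v univ + c)
    (A : Fin 3 → Finset V) (hA : ∀ i, #(A i) = t)
    (core : ∀ i j, i ≠ j → ∀ v ∈ A i, nnon G v (A j) ≤ 0) :
    ∃ (U : Finset V) (cl : V → Fin 3), M * #Uᶜ ≤ 2 * Fintype.card V ∧
      ∀ x ∈ U, ∀ y ∈ U, cl x = cl y → ¬ G.Adj x y := by
  set n := Fintype.card V
  have size1 : ∀ i, 2 * (M * (3 * K)) + 3 * K * (0 + 1) ≤ #(A i) := by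
    intro i; rw [hA, ht]; omega
  have size0 : ∀ i, 2 * 0 + 3 * K * (0 + 1) ≤ #(A i) := by
    intro i; rw [hA, ht]; omega
  let B : Finset V := {v | ∀ i, 3 * K * (0 + 1) ≤ nadj G v (A i)}
  let Z : Finset V := {v | ∃ i, ∀ j ≠ i, nnon G v (A j) ≤ M * (3 * K)}
  have hZ : ∀ v, ∃ i, v ∈ Z → ∀ j ≠ i, nnon G v (A j) ≤ M * (3 * K) := by
    intro v
    by_cases hv : v ∈ Z
    · obtain ⟨i, hi⟩ := (mem_filter.1 hv).2
      exact ⟨i, fun _ => hi⟩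
    · exact ⟨0, fun h => absurd h hv⟩
  choose cl hcl using hZ
  obtain ⟨_, hBc, -⟩ := exists_cover G A k hk hK hh hfree core size0 B ∅ cl
    (Finset.disjoint_empty_right _) (fun v hv => (mem_filter.1 hv).2)
    (fun v hv => absurd hv (notMem_empty v))
  obtain ⟨S, hSc, hS⟩ := exists_cover G A k hk hK hh hfree core size1 ∅ Z cl
    (Finset.disjoint_empty_left _) (fun v hv => absurd hv (notMem_empty v))
    (fun v hv => hcl v hv)
  let X : Finset V := univ \ (Z ∪ B)
  have hX : ∀ v, ∑ i, nadj G v (A i) + (if v ∈ X then M * (3 * K) else 0) ≤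
      2 * t + 3 * K + if v ∈ B then t else 0 := by
    intro v
    rw [Fin.sum_univ_three]
    have a0 := nadj_add_nnon G v (A 0)
    have a1 := nadj_add_nnon G v (A 1)
    have a2 := nadj_add_nnon G v (A 2)
    rw [hA] at a0 a1 a2
    by_cases hvB : v ∈ B
    · have : v ∉ X := by simp [X, hvB]
      rw [if_pos hvB, if_neg this]
      omega
    rw [if_neg hvB]
    have hB' : ∃ i, nadj G v (A i) < 3 * K := by
      by_contra! hcon
      exact hvB (mem_filter.2 ⟨mem_univ _, by simpa using hcon⟩)
    obtain ⟨i, hi⟩ := hB'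
    by_cases hvX : v ∈ X
    · rw [if_pos hvX]
      have hvZ : v ∉ Z := fun h => (mem_sdiff.1 hvX).2 (mem_union_left _ h)
      have : ∃ j, j ≠ i ∧ M * (3 * K) < nnon G v (A j) := by
        by_contra! hcon
        exact hvZ (mem_filter.2 ⟨mem_univ _, i, hcon⟩)
      obtain ⟨j, hji, hj⟩ := this
      fin_cases i <;> fin_cases j <;> simp at hji hi hj <;> omega
    · rw [if_neg hvX]
      fin_cases i <;> simp at hi <;> omega
  have hup : ∑ v, ∑ i, nadj G v (A i) + #X * (M * (3 * K)) ≤ n * (2 * t + 3 * K) + #B * t := by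
    have := sum_le_sum fun v (_ : v ∈ (univ : Finset V)) => hX v
    rw [sum_add_distrib, sum_add_distrib, sum_const, card_univ, smul_eq_mul, ← sum_filter,
      ← sum_filter, sum_const, sum_const, smul_eq_mul, smul_eq_mul, filter_mem_eq_inter,
      filter_mem_eq_inter, univ_inter, univ_inter] at this
    exact this
  have hlow : 2 * n * t ≤ ∑ v, ∑ i, nadj G v (A i) + c * t := by
    have h1 : ∀ i, t * (2 * n) ≤ 3 * ∑ v, nadj G v (A i) + t * c := by
      intro i
      rw [sum_nadj_comm, ← hA i, ← smul_eq_mul, ← sum_const, ← smul_eq_mul (#(A i)), ← sum_const,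
        mul_sum, ← sum_add_distrib]
      exact sum_le_sum fun v _ => hdeg v
    rw [sum_comm, Fin.sum_univ_three]
    have e0 := h1 0
    have e1 := h1 1
    have e2 := h1 2
    linarith
  have hXle : #X * M ≤ n + t * (c + h) := by
    have hb : #B ≤ h := by omega
    have : #B * t ≤ h * t := Nat.mul_le_mul_right _ hb
    have h3 : #X * M * (3 * K) ≤ n * (3 * K) + t * (c + h) := by linarith
    by_contra! hcon
    have h4 : (n + t * (c + h) + 1) * (3 * K) ≤ #X * M * (3 * K) := Nat.mul_le_mul_right _ hcon
    have h5 : t * (c + h) * 1 ≤ t * (c + h) * (3 * K) := Nat.mul_le_mul_left _ (by omega)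
    have h6 : (n + t * (c + h) + 1) * (3 * K) = n * (3 * K) + t * (c + h) * (3 * K) + 3 * K := by
      ring
    omega
  refine ⟨Z \ S, cl, ?_, fun x hx y hy hc hadj => ?_⟩
  · have h1 : (Z \ S)ᶜ ⊆ X ∪ B ∪ S := by
      intro v hv
      simp only [X, mem_compl, mem_sdiff, mem_union, mem_univ, true_and] at hv ⊢
      tauto
    have h2 : #(Z \ S)ᶜ ≤ #X + 3 * h := by
      have e1 := card_le_card h1
      have e2 := card_union_le (X ∪ B) S
      have e3 := card_union_le X B
      omega
    have h3 : M * #(Z \ S)ᶜ ≤ M * (#X + 3 * h) := Nat.mul_le_mul_left _ h2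
    linarith
  · rcases hS x (mem_sdiff.1 hx).1 y (mem_sdiff.1 hy).1 hc hadj with h | h
    · exact (mem_sdiff.1 hx).2 h
    · exact (mem_sdiff.1 hy).2 h

/-- A rough partition is refined to one with at most `h - 1` exceptional vertices, whose classes
have few inner edges. -/
lemma exists_fine [Nonempty V] [Fintype V] (G : SimpleGraph V) {m : ℕ} (k : Fin m → ℕ)
    (hk : ∀ i, 4 ≤ k i) {K : ℕ} (hK0 : 1 ≤ K)
    (hK : ∑ i, (k i + 2) ≤ K) {h : ℕ} (hh : h = #(univ.filter (fun i => Even (k i))))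
    (hfree : ¬ Contains G (disjointSigma (fun i => wheelGraph (k i))))
    (c : ℕ) (hn : 1000 * (K * (c + 1)) ≤ Fintype.card V)
    (hdeg : ∀ v, 2 * Fintype.card V ≤ 3 * nadj G v univ + c)
    (U : Finset V) (cl : V → Fin 3) (hU : 1000 * K * #Uᶜ ≤ 2 * Fintype.card V)
    (hcl : ∀ x ∈ U, ∀ y ∈ U, cl x = cl y → ¬ G.Adj x y) :
    ∃ (B S : Finset V) (cl' : V → Fin 3) (I : ℕ), 2 * #B + #S + 2 ≤ 2 * h ∧
      12 * I ≤ Fintype.card V ∧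
      (∀ x ∉ B, ∀ y ∉ B, cl' x = cl' y → G.Adj x y → x ∈ S ∨ y ∈ S) ∧
      ∀ v ∉ B, nadj G v {w | w ∉ B ∧ cl' w = cl' v} ≤ I := by
  set n := Fintype.card V with hndef
  set R := #Uᶜ with hR
  -- the arithmetic facts about `K`, `R` and `c` that the estimates below need
  have r1 : 1000 * (K * R) ≤ 2 * n := by rw [← mul_assoc]; exact hU
  have r2 : R ≤ K * R := Nat.le_mul_of_pos_left _ hK0
  have r3 : K * (c + 1) = K * c + K := by ring
  have r4 : c ≤ K * c := Nat.le_mul_of_pos_left _ hK0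
  have rD : 3 * K * (R + c + 1) = 3 * (K * R) + 3 * (K * c) + 3 * K := by ring
  set D := 3 * K * (R + c + 1) with hD
  let A : Fin 3 → Finset V := fun i => {v ∈ U | cl v = i}
  have hAm : ∀ {i v}, v ∈ A i ↔ v ∈ U ∧ cl v = i := fun {i v} => mem_filter
  have hAd : ∀ {i j}, i ≠ j → Disjoint (A i) (A j) := by
    intro i j hij
    rw [Finset.disjoint_left]
    intro v hi hj
    exact hij ((hAm.1 hi).2.symm.trans (hAm.1 hj).2)
  have hnon : ∀ v, 3 * nnon G v univ ≤ n + c := by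
    intro v
    have e1 := nadj_add_nnon G v univ
    have e2 := hdeg v
    rw [card_univ, ← hndef] at e1
    omega
  have hAA : ∀ i, ∀ v ∈ A i, nnon G v (A i) = #(A i) := by
    intro i v hv
    rw [nnon, filter_true_of_mem]
    intro w hw
    exact hcl v (hAm.1 hv).1 w (hAm.1 hw).1 ((hAm.1 hv).2.trans (hAm.1 hw).2.symm)
  have hAup : ∀ i, 3 * #(A i) ≤ n + c := by
    intro i
    rcases (A i).eq_empty_or_nonempty with he | ⟨v, hv⟩
    · rw [he]; simp
    · have e1 := hAA i v hv
      have e2 := nnon_mono G v (subset_univ (A i))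
      have e3 := hnon v
      omega
  have hAsum : #(A 0) + #(A 1) + #(A 2) + R = n := by
    have h1 : #U = ∑ i, #(A i) := card_eq_sum_card_fiberwise fun w _ => mem_univ _
    rw [← Fin.sum_univ_three (fun i => #(A i)), ← h1, hR, hndef]
    exact card_add_card_compl U
  have hAlow : ∀ i, n ≤ 3 * #(A i) + 3 * R + 2 * c := by
    have e0 := hAup 0
    have e1 := hAup 1
    have e2 := hAup 2
    intro i
    fin_cases i <;> simp <;> omega
  have hpair : ∀ i j, i ≠ j → ∀ v, 3 * nnon G v (A i) + 3 * nnon G v (A j) ≤ n + c := by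
    intro i j hij v
    have e1 := nnon_union_of_disjoint G v (hAd hij)
    have e2 := nnon_mono G v (subset_univ (A i ∪ A j))
    have e3 := hnon v
    omega
  have core : ∀ i j, i ≠ j → ∀ v ∈ A i, nnon G v (A j) ≤ R + c := by
    intro i j hij v hv
    have e1 := hpair i j hij v
    rw [hAA i v hv] at e1
    have e2 := hAlow i
    omega
  let B : Finset V := {v | ∀ i, D ≤ nadj G v (A i)}
  have hB : ∀ v, ∃ i, v ∉ B → nadj G v (A i) < D := by
    intro v
    by_cases hv : v ∈ B
    · exact ⟨0, fun h => absurd hv h⟩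
    · by_contra! hcon
      exact hv (mem_filter.2 ⟨mem_univ _, fun i => (hcon i).2⟩)
  choose cl' hcl' using hB
  have hZ : ∀ v ∉ B, ∀ j ≠ cl' v, nnon G v (A j) ≤ R + c + D := by
    intro v hv j hj
    have e1 := hpair (cl' v) j hj.symm v
    have e2 := nadj_add_nnon G v (A (cl' v))
    have e3 := hcl' v hv
    have e4 := hAlow (cl' v)
    omega
  have size : ∀ i, 2 * (R + c + D) + D ≤ #(A i) := by
    intro i
    have := hAlow i
    omega
  obtain ⟨S, hS, hcov⟩ := exists_cover G A k hk hK hh hfree core size B (univ \ B) cl'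
    Finset.disjoint_sdiff (fun v hv => (mem_filter.1 hv).2)
    (fun v hv => hZ v (mem_sdiff.1 hv).2)
  refine ⟨B, S, cl', D + R, hS, by omega, fun x hx y hy => hcov x (by simpa using hx) y
    (by simpa using hy), fun v hv => ?_⟩
  have hsub : ({w ∈ ({w | w ∉ B ∧ cl' w = cl' v} : Finset V) | G.Adj v w}) ⊆
      {w ∈ A (cl' v) | G.Adj v w} ∪ Uᶜ := by
    intro w hw
    simp only [mem_filter, mem_univ, true_and] at hw
    obtain ⟨⟨hwB, hwc⟩, hvw⟩ := hw
    by_cases hwU : w ∈ U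
    · refine mem_union_left _ (mem_filter.2 ⟨hAm.2 ⟨hwU, ?_⟩, hvw⟩)
      by_contra hne
      have e1 := core (cl w) (cl' v) hne w (hAm.2 ⟨hwU, rfl⟩)
      have e2 := nadj_add_nnon G w (A (cl' v))
      have e3 := hcl' w hwB
      rw [hwc] at e3
      have e4 := size (cl' v)
      omega
    · exact mem_union_right _ (mem_compl.2 hwU)
  refine (card_le_card hsub).trans ((card_union_le _ _).trans ?_)
  exact Nat.add_le_add_right (hcl' v hv).le _

/-! ### The structure of dense wheel-free graphs -/

lemma nadj_univ [Fintype V] (G : SimpleGraph V) (v : V) : nadj G v univ = G.degree v := by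
  rw [← G.card_neighborFinset_eq_degree, neighborFinset_eq_filter]
  rfl

/-- The Erdős–Stone step: high minimum degree forces a complete tripartite graph. -/
lemma exists_tripartite (c t : ℕ) : ∃ N, ∀ (V : Type) [Fintype V] (G : SimpleGraph V),
    N ≤ Fintype.card V → (∀ v, 2 * Fintype.card V ≤ 3 * nadj G v univ + c) →
    ∃ A : Fin 3 → Finset V, (∀ i, #(A i) = t) ∧
      ∀ i j, i ≠ j → ∀ v ∈ A i, nnon G v (A j) ≤ 0 := by
  have h := eventually_completeEquipartiteGraph_isContained_of_minDegree
    (ε := 1 / 12) (by norm_num) 2 t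
  rw [Filter.eventually_atTop] at h
  obtain ⟨N, hN⟩ := h
  refine ⟨N + 4 * c + 1, fun V _ G hV hdeg => ?_⟩
  have hne : Nonempty V := Fintype.card_pos_iff.1 (by omega)
  let e := G.overFinIso (rfl : Fintype.card V = Fintype.card V)
  have hmin : ((G.overFin rfl).minDegree : ℝ) ≥
      (1 - 1 / (2 : ℕ) + 1 / 12) * (Fintype.card V : ℝ) := by
    have h1 : 2 * Fintype.card V ≤ 3 * (G.overFin rfl).minDegree + c := by
      rw [← e.minDegree_eq]
      obtain ⟨v, hv⟩ := G.exists_minimal_degree_vertex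
      rw [hv, ← nadj_univ]
      exact hdeg v
    have h2 : (2 * Fintype.card V : ℝ) ≤ 3 * (G.overFin rfl).minDegree + c := by exact_mod_cast h1
    have h3 : (4 * c : ℝ) ≤ Fintype.card V := by exact_mod_cast (by omega : 4 * c ≤ Fintype.card V)
    push_cast
    linarith
  obtain ⟨f⟩ := hN (Fintype.card V) (by omega) (G := G.overFin rfl) hmin
  let g : Fin 3 × Fin t → V := fun x => e.symm (f x)
  have hg : Function.Injective g := e.symm.injective.comp f.injective
  have hadj : ∀ i j, i ≠ j → ∀ a b, G.Adj (g (i, a)) (g (j, b)) := by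
    intro i j hij a b
    refine e.symm.map_rel_iff.2 (f.toHom.map_rel ?_)
    rw [completeEquipartiteGraph_adj]
    exact hij
  refine ⟨fun i => univ.image fun a => g (i, a), fun i => ?_, fun i j hij v hv => ?_⟩
  · change #(image (g ∘ Prod.mk i) univ) = t
    rw [card_image_of_injective _ (hg.comp (Prod.mk_right_injective i))]
    simp
  · rw [Nat.le_zero, nnon, card_eq_zero, filter_eq_empty_iff]
    intro w hw
    obtain ⟨a, -, rfl⟩ := mem_image.1 hv
    obtain ⟨b, -, rfl⟩ := mem_image.1 hw
    exact not_not.2 (hadj i j hij a b)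

/-- A dense free graph of large minimum degree has a set of `h - 1` vertices whose removal leaves a
3-colourable graph. -/
lemma exists_core {m : ℕ} (k : Fin m → ℕ) (hk : ∀ i, 4 ≤ k i) {h : ℕ}
    (hh : h = #(univ.filter (fun i => Even (k i)))) (c C : ℕ) :
    ∃ N, ∀ (V : Type) [Fintype V] (G : SimpleGraph V), N ≤ Fintype.card V →
    ¬ Contains G (disjointSigma (fun i => wheelGraph (k i))) →
    (∀ v, 2 * Fintype.card V ≤ 3 * nadj G v univ + c) →
    2 * Fintype.card V ^ 2 + 2 * (h - 1) * Fintype.card V ≤ 3 * E2 G + C →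
    ∃ (B : Finset V) (cl : V → Fin 3), #B = h - 1 ∧
      ∀ x ∉ B, ∀ y ∉ B, cl x = cl y → ¬ G.Adj x y := by
  obtain ⟨K, hK0, hK⟩ : ∃ K, 1 ≤ K ∧ ∑ i, (k i + 2) ≤ K :=
    ⟨∑ i, (k i + 2) + 1, by omega, by omega⟩
  obtain ⟨M, hM⟩ : ∃ M, M = 1000 * K := ⟨_, rfl⟩
  obtain ⟨t, ht⟩ : ∃ t, t = 2 * (M * (3 * K)) + 3 * K := ⟨_, rfl⟩
  obtain ⟨N, hN⟩ := exists_tripartite c t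
  refine ⟨N + (t * (c + h) + 3 * h * M) + 1000 * (K * (c + 1)) + C + 1,
    fun V _ G hV hfree hdeg hE => ?_⟩
  have hne : Nonempty V := Fintype.card_pos_iff.1 (by omega)
  obtain ⟨A, hA, hcore⟩ := hN V G (by omega) hdeg
  obtain ⟨U, cl₀, hU, hcl₀⟩ := exists_rough G k hk hK0 hK hh hfree c M t ht (by omega) hdeg A hA
    hcore
  obtain ⟨B, S, cl, I, hBS, hI, hcov, hint⟩ := exists_fine G k hk hK0 hK hh hfree c (by omega) hdeg
    U cl₀ (hM ▸ hU) hcl₀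
  have hcount := E2_le G B S cl I hcov hint
  obtain ⟨g, hg⟩ : ∃ g, h - 1 = #B + g := ⟨h - 1 - #B, by omega⟩
  rcases Nat.eq_zero_or_pos g with rfl | hg0
  · refine ⟨B, cl, by omega, fun x hx y hy hc hxy => ?_⟩
    have hS : S = ∅ := card_eq_zero.1 (by omega)
    simpa [hS] using hcov x hx y hy hc hxy
  · -- each vertex missing from `B` costs `2n`, which `S` cannot make up for
    exfalso
    set n := Fintype.card V
    have h1 : #S ≤ 2 * g := by omega
    have h2 : 6 * #S * I ≤ 6 * (2 * g) * I := by gcongr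
    have h3 : 12 * I * g ≤ n * g := Nat.mul_le_mul_right _ hI
    have h4 : n * 1 ≤ n * g := Nat.mul_le_mul_left _ hg0
    rw [hg] at hE
    have h5 : C + 1 ≤ n := by omega
    nlinarith

/-- The degree sum and the degrees of the subgraph induced on `S`. -/
lemma E2_induce [Fintype V] (G : SimpleGraph V) (S : Finset V) :
    E2 (G.induce (S : Set V)) = ∑ v ∈ S, nadj G v S ∧
    ∀ v : (S : Set V), nadj (G.induce (S : Set V)) v univ = nadj G v S := by
  have key : ∀ v : (S : Set V), nadj (G.induce (S : Set V)) v univ = nadj G v S := by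
    intro v
    refine card_bij (fun w _ => w) ?_ ?_ ?_
    · intro w hw
      exact mem_filter.2 ⟨w.2, (mem_filter.1 hw).2⟩
    · intro w _ w' _ h
      exact Subtype.ext h
    · intro w hw
      exact ⟨⟨w, (mem_filter.1 hw).1⟩, mem_filter.2 ⟨mem_univ _, (mem_filter.1 hw).2⟩, rfl⟩
  refine ⟨?_, key⟩
  rw [E2, sum_congr rfl fun v _ => key v]
  exact sum_coe_sort S fun v => nadj G v S

lemma sum_nadj_erase (G : SimpleGraph V) (S : Finset V) {v : V} (hv : v ∈ S) :
    ∑ w ∈ S, nadj G w S ≤ ∑ w ∈ S.erase v, nadj G w (S.erase v) + 2 * nadj G v S := by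
  rw [← add_sum_erase S _ hv, sum_nadj_comm, ← add_sum_erase S _ hv]
  have := nadj_mono G v (erase_subset v S)
  omega

lemma card_coe_sort (S : Finset V) [Fintype (S : Set V)] : Fintype.card (S : Set V) = #S := by
  simp

/-- The minimum degree assumption of `exists_core` can be dropped: successively removing vertices of
small degree would increase the relative density beyond what is possible. -/
lemma exists_structure {m : ℕ} (k : Fin m → ℕ) (hk : ∀ i, 4 ≤ k i) {h : ℕ}
    (hh : h = #(univ.filter (fun i => Even (k i)))) (C : ℕ) :
    ∃ N, ∀ (V : Type) [Fintype V] (G : SimpleGraph V), N ≤ Fintype.card V →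
    ¬ Contains G (disjointSigma (fun i => wheelGraph (k i))) →
    2 * Fintype.card V ^ 2 + 2 * (h - 1) * Fintype.card V ≤ 3 * E2 G + C →
    ∃ (B : Finset V) (cl : V → Fin 3), #B = h - 1 ∧
      ∀ x ∉ B, ∀ y ∉ B, cl x = cl y → ¬ G.Adj x y := by
  obtain ⟨N, hN⟩ := exists_core k hk hh (C + 2) C
  refine ⟨N + N ^ 2 + C + 1, fun V _ G hV hfree hE => ?_⟩
  set n := Fintype.card V with hn
  let P : Finset V → Prop := fun S =>
    2 * #S ^ 2 + 2 * (h - 1) * #S + (C + 2) * #Sᶜ ≤ 3 * ∑ v ∈ S, nadj G v S + C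
  have hPu : P univ := by
    change 2 * #(univ : Finset V) ^ 2 + 2 * (h - 1) * #(univ : Finset V) +
      (C + 2) * #(univ : Finset V)ᶜ ≤ 3 * E2 G + C
    rw [compl_univ, card_empty, card_univ]
    simpa using hE
  obtain ⟨S, hS, hmin⟩ := exists_min_image (univ.filter P) card ⟨univ, by simpa using hPu⟩
  have hPS : 2 * #S ^ 2 + 2 * (h - 1) * #S + (C + 2) * #Sᶜ ≤ 3 * ∑ v ∈ S, nadj G v S + C :=
    (mem_filter.1 hS).2
  have hcompl : #S + #Sᶜ = n := card_add_card_compl S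
  have hdeg : ∀ v ∈ S, 2 * #S ≤ 3 * nadj G v S + (C + 2) := by
    intro v hv
    by_contra! hcon
    have hlt : #(S.erase v) < #S := card_erase_lt_of_mem hv
    have hnP : ¬ P (S.erase v) := fun hP =>
      absurd (hmin _ (mem_filter.2 ⟨mem_univ _, hP⟩)) (not_le.2 hlt)
    have hnP' : 3 * ∑ w ∈ S.erase v, nadj G w (S.erase v) + C <
        2 * #(S.erase v) ^ 2 + 2 * (h - 1) * #(S.erase v) + (C + 2) * #(S.erase v)ᶜ := not_le.1 hnP
    have e1 := sum_nadj_erase G S hv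
    have e2 : #(S.erase v) + 1 = #S := card_erase_add_one hv
    have e3 : #(S.erase v) + #(S.erase v)ᶜ = n := card_add_card_compl _
    have e4 : #(S.erase v)ᶜ = #Sᶜ + 1 := by omega
    rw [e4] at hnP'
    rw [← e2] at hPS hcon
    nlinarith
  have hup : ∑ v ∈ S, nadj G v S ≤ #S * #S :=
    sum_le_card_nsmul _ _ _ fun v _ => nadj_le_card G v S
  have hbig : N ≤ #S := by
    by_contra! hcon
    have : #S ^ 2 ≤ N ^ 2 := Nat.pow_le_pow_left hcon.le 2
    nlinarith
  obtain ⟨hE2, hnadj⟩ := E2_induce G S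
  have hcard : Fintype.card (S : Set V) = #S := card_coe_sort S
  obtain ⟨B, cl, hB, hcl⟩ := hN (S : Set V) (G.induce (S : Set V)) (by rw [hcard]; exact hbig)
    (by
      rintro ⟨f, hf⟩
      exact hfree ⟨(Embedding.induce (S : Set V)).toHom.comp f,
        (Embedding.induce (G := G) (S : Set V)).injective.comp hf⟩)
    (by
      intro v
      rw [hcard, hnadj]
      exact hdeg v v.2)
    (by rw [hcard, hE2]; omega)
  have hcount := E2_le (G.induce (S : Set V)) B ∅ cl #S
    (fun x hx y hy hc hxy => absurd hxy (hcl x hx y hy hc))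
    (fun v _ => (nadj_le_card _ _ _).trans ((card_le_univ _).trans hcard.le))
  rw [hcard, hE2, hB, card_empty] at hcount
  have hSu : S = univ := by
    rw [← compl_eq_empty_iff, ← card_eq_zero]
    by_contra hne
    have : (C + 2) * 1 ≤ (C + 2) * #Sᶜ := Nat.mul_le_mul_left _ (Nat.pos_of_ne_zero hne)
    omega
  have hmem : ∀ v, v ∈ (S : Set V) := fun v => by rw [hSu]; simp
  refine ⟨B.map (Function.Embedding.subtype _), fun v => cl ⟨v, hmem v⟩, by rw [card_map, hB],
    fun x hx y hy hc hxy => hcl ⟨x, hmem x⟩ (fun hx' => hx ?_) ⟨y, hmem y⟩ (fun hy' => hy ?_) hc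
      hxy⟩
  · exact mem_map_of_mem (Function.Embedding.subtype _) hx'
  · exact mem_map_of_mem (Function.Embedding.subtype _) hy'

/-! ### The join of a clique and a Turán graph -/

lemma graphJoin_inl_inl {α β : Type*} (G : SimpleGraph α) (H : SimpleGraph β) (a b : α) :
    (graphJoin G H).Adj (Sum.inl a) (Sum.inl b) ↔ G.Adj a b := by
  simp only [graphJoin, fromRel_adj, ne_eq, Sum.inl.injEq]
  exact ⟨fun h => h.2.elim id SimpleGraph.Adj.symm, fun h => ⟨h.ne, Or.inl h⟩⟩

lemma graphJoin_inr_inr {α β : Type*} (G : SimpleGraph α) (H : SimpleGraph β) (a b : β) :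
    (graphJoin G H).Adj (Sum.inr a) (Sum.inr b) ↔ H.Adj a b := by
  simp only [graphJoin, fromRel_adj, ne_eq, Sum.inr.injEq]
  exact ⟨fun h => h.2.elim id SimpleGraph.Adj.symm, fun h => ⟨h.ne, Or.inl h⟩⟩

lemma graphJoin_inl_inr {α β : Type*} (G : SimpleGraph α) (H : SimpleGraph β) (a : α) (b : β) :
    (graphJoin G H).Adj (Sum.inl a) (Sum.inr b) := by
  simp [graphJoin]

/-- An even wheel is not 3-colourable, as its rim is an odd cycle, so every copy of it meets a set
`B` whose removal leaves a graph with proper 3-colouring `cl`. -/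
lemma even_wheel_meets (G : SimpleGraph V) (B : Finset V) (cl : V → Fin 3)
    (hcl : ∀ x ∉ B, ∀ y ∉ B, cl x = cl y → ¬ G.Adj x y) {k : ℕ} (hk : 4 ≤ k) (he : Even k)
    (f : wheelGraph k →g G) : ∃ x, f x ∈ B := by
  by_contra! hcon
  have hne : ∀ x y, (wheelGraph k).Adj x y → cl (f x) ≠ cl (f y) := fun x y hxy h =>
    hcl _ (hcon x) _ (hcon y) h (f.map_rel hxy)
  let z := cl (f (Sum.inl ()))
  have hub : ∀ j, cl (f (Sum.inr j)) ≠ z := fun j =>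
    (hne _ _ (graphJoin_inl_inr _ _ () j)).symm
  let C : (cycleGraph (k - 1)).Coloring {i : Fin 3 // i ≠ z} :=
    Coloring.mk (fun j => ⟨cl (f (Sum.inr j)), hub j⟩) fun {i j} hij h =>
      hne _ _ ((graphJoin_inr_inr _ _ i j).2 hij) (congrArg Subtype.val h)
  have h2 : (cycleGraph (k - 1)).Colorable 2 := by
    have := C.colorable
    rwa [Fintype.card_subtype_compl, Fintype.card_subtype_eq, Fintype.card_fin] at this
  have h3 := chromaticNumber_cycleGraph_of_odd (k - 1) (by omega)
    (Nat.Even.sub_odd (by omega) he odd_one)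
  have h4 := h2.chromaticNumber_le
  rw [h3] at h4
  exact absurd h4 (by decide)

/-- A graph that becomes 3-colourable after deleting fewer vertices than there are even wheels does
not contain the union of wheels. -/
lemma not_contains {m : ℕ} (k : Fin m → ℕ) (hk : ∀ i, 4 ≤ k i) (G : SimpleGraph V)
    (B : Finset V) (cl : V → Fin 3) (hcl : ∀ x ∉ B, ∀ y ∉ B, cl x = cl y → ¬ G.Adj x y)
    (hB : #B < #(univ.filter (fun i => Even (k i)))) :
    ¬ Contains G (disjointSigma (fun i => wheelGraph (k i))) := by
  rintro ⟨f, hf⟩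
  have hw : ∀ i, ∃ x : Unit ⊕ Fin (k i - 1), Even (k i) → f ⟨i, x⟩ ∈ B := by
    intro i
    by_cases he : Even (k i)
    · let g : wheelGraph (k i) →g G :=
        ⟨fun x => f ⟨i, x⟩, fun {x y} hxy => f.map_rel (by
          rw [disjointSigma, fromRel_adj]
          refine ⟨fun h => hxy.ne ?_, Or.inl ⟨rfl, hxy⟩⟩
          simpa using h)⟩
      obtain ⟨x, hx⟩ := even_wheel_meets G B cl hcl (hk i) he g
      exact ⟨x, fun _ => hx⟩
    · exact ⟨Sum.inl (), fun h => absurd h he⟩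
  choose x hx using hw
  refine absurd (card_le_card_of_injOn (fun i => f ⟨i, x i⟩) (fun i hi => ?_) fun i _ j _ hij => ?_)
    (not_le.2 hB)
  · exact hx i (mem_filter.1 hi).2
  · exact congrArg Sigma.fst (hf hij)

lemma E2_eq [Fintype V] (G : SimpleGraph V) : E2 G = 2 * Nat.card G.edgeSet := by
  rw [Nat.card_eq_fintype_card, ← edgeFinset_card, ← sum_degrees_eq_twice_card_edges]
  exact sum_congr rfl fun v _ => nadj_univ G v

lemma E2_congr {W : Type*} [Fintype V] [Fintype W] {G : SimpleGraph V} {H : SimpleGraph W}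
    (e : G ≃g H) : E2 G = E2 H := by
  rw [E2_eq, E2_eq, Nat.card_congr e.mapEdgeSet]

lemma E2_turanGraph (N : ℕ) : 2 * N ^ 2 ≤ 3 * E2 (turanGraph N 3) + 2 := by
  rw [E2_eq, Nat.card_eq_fintype_card, ← edgeFinset_card, card_edgeFinset_turanGraph]
  obtain ⟨q, r, hr, rfl⟩ : ∃ q r, r < 3 ∧ N = 3 * q + r :=
    ⟨N / 3, N % 3, Nat.mod_lt _ (by norm_num), (Nat.div_add_mod N 3).symm⟩
  have h1 : (3 * q + r) % 3 = r := by omega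
  have h2 : ((3 * q + r) ^ 2 - r ^ 2) * (3 - 1) / (2 * 3) = 3 * q ^ 2 + 2 * q * r := by
    have : (3 * q + r) ^ 2 - r ^ 2 = 3 * (3 * q ^ 2 + 2 * q * r) :=
      Nat.sub_eq_of_eq_add (by ring)
    rw [this]
    omega
  rw [h1, h2]
  interval_cases r <;> simp <;> nlinarith

/-- Turán's theorem, in terms of degree sums. -/
lemma turan_E2 {W : Type*} [Fintype W] (H : SimpleGraph W) (cl : W → Fin 3)
    (hcl : ∀ x y, cl x = cl y → ¬ H.Adj x y) {N : ℕ} (hN : Fintype.card W = N) :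
    E2 H ≤ E2 (turanGraph N 3) ∧
      (E2 (turanGraph N 3) ≤ E2 H → Nonempty (H ≃g turanGraph N 3)) := by
  subst hN
  have hfree : H.CliqueFree (3 + 1) :=
    (show H.Coloring (Fin 3) from Coloring.mk cl fun {x y} hxy h => hcl x y h hxy).colorable
      |>.cliqueFree (by simp)
  have hE : ∀ H' : SimpleGraph W, E2 H' = 2 * #H'.edgeFinset := fun H' => by
    rw [E2_eq, Nat.card_eq_fintype_card, ← edgeFinset_card]
  obtain ⟨M, _, hM⟩ := exists_isTuranMaximal (V := W) (r := 3) (by norm_num)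
  obtain ⟨e⟩ := hM.nonempty_iso_turanGraph
  rw [← E2_congr e]
  have hle : ∀ {H' : SimpleGraph W}, H'.CliqueFree (3 + 1) → E2 H' ≤ E2 M := by
    intro H' h
    have := hM.2 h
    rw [hE, hE]
    convert Nat.mul_le_mul_left 2 this
  refine ⟨hle hfree, fun hge => ?_⟩
  refine IsTuranMaximal.nonempty_iso_turanGraph (G := H) ⟨hfree, fun H' _ h => ?_⟩
  have h1 := (hle h).trans hge
  rw [hE, hE] at h1
  convert Nat.le_of_mul_le_mul_left h1 (by norm_num)

/-- The extremal graph on the vertex set `Fin a ⊕ Fin N`. -/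
noncomputable abbrev joinT (a N : ℕ) : SimpleGraph (Fin a ⊕ Fin N) :=
  graphJoin (completeGraph (Fin a)) (turanGraph N 3)

lemma E2_joinT (a N : ℕ) : E2 (joinT a N) = a * (a + N - 1) + N * a + E2 (turanGraph N 3) := by
  have hsplit : ∀ v, nadj (joinT a N) v univ =
      #{x : Fin a | (joinT a N).Adj v (Sum.inl x)} +
      #{y : Fin N | (joinT a N).Adj v (Sum.inr y)} := by
    intro v
    simp only [nadj, card_filter, Fintype.sum_sum_type]
  have hl : ∀ x, nadj (joinT a N) (Sum.inl x) univ = a + N - 1 := by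
    intro x
    have h1 : ({y : Fin a | (joinT a N).Adj (Sum.inl x) (Sum.inl y)} : Finset _) =
        univ.erase x := by
      ext y
      simp only [mem_filter, mem_univ, true_and, graphJoin_inl_inl, mem_erase, and_true]
      exact ne_comm
    have h2 : ({y : Fin N | (joinT a N).Adj (Sum.inl x) (Sum.inr y)} : Finset _) = univ :=
      filter_true_of_mem fun y _ => graphJoin_inl_inr _ _ _ _
    have := x.2
    rw [hsplit, h1, h2, card_erase_of_mem (mem_univ _), card_univ, card_univ, Fintype.card_fin,
      Fintype.card_fin]
    omega
  have hr : ∀ y, nadj (joinT a N) (Sum.inr y) univ = a + nadj (turanGraph N 3) y univ := by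
    intro y
    have h1 : ({x : Fin a | (joinT a N).Adj (Sum.inr y) (Sum.inl x)} : Finset _) = univ :=
      filter_true_of_mem fun x _ => (graphJoin_inl_inr _ _ _ _).symm
    rw [hsplit, h1, card_univ, Fintype.card_fin]
    simp only [graphJoin_inr_inr, nadj]
    congr!
  rw [E2, Fintype.sum_sum_type, sum_congr rfl fun x _ => hl x, sum_congr rfl fun y _ => hr y,
    sum_add_distrib]
  simp [E2, add_assoc]

lemma E2_joinT_lower (a N : ℕ) :
    2 * (a + N) ^ 2 + 2 * a * (a + N) ≤ 3 * E2 (joinT a N) + (a ^ 2 + 3 * a + 2) := by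
  rw [E2_joinT]
  have h1 := E2_turanGraph N
  have h2 : a * (a + N - 1) + a = a * (a + N) := by
    rcases Nat.eq_zero_or_pos a with rfl | ha
    · simp
    · rw [← Nat.mul_succ]; congr 1; omega
  nlinarith

/-- The graphs that become 3-colourable after deleting a set `B` of `a` vertices have at most as
many edges as `joinT a N`, and equality forces an isomorphism. -/
lemma iso_of_structure [Fintype V] (G : SimpleGraph V) (B : Finset V) (cl : V → Fin 3)
    (hcl : ∀ x ∉ B, ∀ y ∉ B, cl x = cl y → ¬ G.Adj x y) {a N : ℕ} (hB : #B = a)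
    (hV : Fintype.card V = a + N) (hE : E2 (joinT a N) ≤ E2 G) :
    Nonempty (G ≃g joinT a N) := by
  have hBc : #Bᶜ = N := by
    have := card_add_card_compl B
    omega
  obtain ⟨hE', -⟩ := E2_induce G Bᶜ
  obtain ⟨ht1, ht2⟩ := turan_E2 (G.induce ((Bᶜ : Finset V) : Set V)) (fun v => cl v)
    (fun x y h => hcl x (mem_compl.1 x.2) y (mem_compl.1 y.2) h) ((card_coe_sort Bᶜ).trans hBc)
  have hsplit : ∀ v, nadj G v univ = nadj G v B + nadj G v Bᶜ := by
    intro v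
    rw [nadj, nadj, nadj, ← card_union_of_disjoint (disjoint_filter_filter disjoint_compl_right),
      ← filter_union, union_compl]
  have hsum : E2 G = ∑ v ∈ B, nadj G v univ + (∑ v ∈ Bᶜ, nadj G v B +
      E2 (G.induce ((Bᶜ : Finset V) : Set V))) := by
    rw [hE', ← sum_add_distrib, ← sum_congr rfl fun v _ => hsplit v, sum_add_sum_compl]
    rfl
  have hdeg : ∀ v ∈ B, nadj G v univ ≤ a + N - 1 := by
    intro v _
    rw [nadj_univ, ← hV]
    exact Nat.le_sub_one_of_lt (G.degree_lt_card_verts v)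
  have h1 : ∑ v ∈ B, nadj G v univ ≤ ∑ v ∈ B, (a + N - 1) := sum_le_sum hdeg
  have h2 : ∑ v ∈ Bᶜ, nadj G v B ≤ #Bᶜ * a :=
    sum_le_card_nsmul _ _ _ fun v _ => (nadj_le_card G v B).trans hB.le
  have h3 : ∑ v ∈ B, (a + N - 1) = a * (a + N - 1) := by rw [sum_const, hB, smul_eq_mul]
  rw [hBc] at h2
  rw [E2_joinT] at hE
  obtain ⟨e⟩ := ht2 (by omega)
  have hfull : ∀ v ∈ B, nadj G v univ = a + N - 1 :=
    (sum_eq_sum_iff_of_le hdeg).1 (by omega)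
  -- the vertices of `B` are adjacent to all others
  have hadj : ∀ v ∈ B, ∀ w, v ≠ w → G.Adj v w := by
    intro v hv w hvw
    have hd : G.degree v = Fintype.card V - 1 := by rw [← nadj_univ, hfull v hv, hV]
    by_contra hcon
    have hsub : G.neighborFinset v ⊆ (univ.erase v).erase w := by
      intro u hu
      rw [mem_neighborFinset] at hu
      refine mem_erase.2 ⟨?_, mem_erase.2 ⟨hu.ne', mem_univ _⟩⟩
      rintro rfl
      exact hcon hu
    have hc := card_le_card hsub
    rw [G.card_neighborFinset_eq_degree, hd,
      card_erase_of_mem (mem_erase.2 ⟨hvw.symm, mem_univ _⟩), card_erase_of_mem (mem_univ _),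
      card_univ] at hc
    have : 1 < Fintype.card V := Fintype.one_lt_card_iff.2 ⟨v, w, hvw⟩
    omega
  let b : B ≃ Fin a := B.equivFinOfCardEq hB
  let g : Fin a ⊕ Fin N → V := Sum.elim (fun i => b.symm i) (fun j => e.symm j)
  have hgl : ∀ i, g (Sum.inl i) ∈ B := fun i => (b.symm i).2
  have hgr : ∀ j, g (Sum.inr j) ∉ B := fun j => mem_compl.1 (e.symm j).2
  have hginj : Function.Injective g := by
    rintro (i | i) (j | j) hij
    · exact congrArg _ (b.symm.injective (Subtype.ext hij))
    · exact absurd (hgl i) (hij ▸ hgr j)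
    · exact absurd (hgl j) (hij ▸ hgr i)
    · exact congrArg _ (e.symm.injective (Subtype.ext hij))
  have hgsurj : Function.Surjective g := by
    intro v
    by_cases hv : v ∈ B
    · exact ⟨Sum.inl (b ⟨v, hv⟩), congrArg Subtype.val (b.symm_apply_apply ⟨v, hv⟩)⟩
    · exact ⟨Sum.inr (e ⟨v, mem_compl.2 hv⟩),
        congrArg Subtype.val (e.symm_apply_apply ⟨v, mem_compl.2 hv⟩)⟩
  have hgadj : ∀ x y, G.Adj (g x) (g y) ↔ (joinT a N).Adj x y := by
    rintro (i | i) (j | j)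
    · rw [graphJoin_inl_inl]
      refine ⟨fun h hij => h.ne (congrArg (fun i => g (Sum.inl i)) hij), fun h => hadj _ (hgl i) _
        fun hij => h (Sum.inl_injective (hginj hij))⟩
    · exact ⟨fun _ => graphJoin_inl_inr _ _ _ _, fun _ => hadj _ (hgl i) _ fun hij =>
        hgr j (hij ▸ hgl i)⟩
    · exact ⟨fun _ => (graphJoin_inl_inr _ _ _ _).symm, fun _ =>
        (hadj _ (hgl j) (g (Sum.inr i)) fun hij => hgr i (hij ▸ hgl j)).symm⟩
    · rw [graphJoin_inr_inr]
      exact e.symm.map_rel_iff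
  exact ⟨(⟨Equiv.ofBijective g ⟨hginj, hgsurj⟩, fun {x y} => hgadj x y⟩ : joinT a N ≃g G).symm⟩

lemma joinT_free {m : ℕ} (k : Fin m → ℕ) (hk : ∀ i, 4 ≤ k i) {a N : ℕ}
    (ha : a < #(univ.filter (fun i => Even (k i)))) (G : SimpleGraph V) (e : G ≃g joinT a N) :
    ¬ Contains G (disjointSigma (fun i => wheelGraph (k i))) := by
  have hT : ¬ Contains (joinT a N) (disjointSigma (fun i => wheelGraph (k i))) := by
    refine not_contains k hk _ (univ.map Function.Embedding.inl)
      (Sum.elim (fun _ => 0) (fun j => ⟨j % 3, Nat.mod_lt _ (by norm_num)⟩)) ?_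
      (by rwa [card_map, card_univ, Fintype.card_fin])
    rintro (i | i) hi (j | j) hj hij
    · simp at hi
    · simp at hi
    · simp at hj
    · rw [graphJoin_inr_inr, turanGraph_adj]
      simpa using hij
  rintro ⟨f, hf⟩
  exact hT ⟨e.toHom.comp f, e.injective.comp hf⟩

/-- Transporting the extremal graph to `Fin n` determines the Turán number. -/
lemma extremal_iff {m : ℕ} (k : Fin m → ℕ) (hk : ∀ i, 4 ≤ k i) {a N n : ℕ} (hn : n = a + N)
    (ha : a < #(univ.filter (fun i => Even (k i))))
    (hmax : ∀ G : SimpleGraph (Fin n),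
      ¬ Contains G (disjointSigma (fun i => wheelGraph (k i))) → E2 (joinT a N) ≤ E2 G →
      Nonempty (G ≃g joinT a N)) (G : SimpleGraph (Fin n)) :
    (¬ Contains G (disjointSigma (fun i => wheelGraph (k i))) ∧
      Nat.card G.edgeSet = exNum n (disjointSigma (fun i => wheelGraph (k i)))) ↔
    Nonempty (G ≃g joinT a N) := by
  have hcard : Fintype.card (Fin a ⊕ Fin N) = n := by simp [hn]
  have hex : exNum n (disjointSigma (fun i => wheelGraph (k i))) =
      Nat.card (joinT a N).edgeSet := by
    refine IsGreatest.csSup_eq ⟨⟨(joinT a N).overFin hcard, ?_, ?_⟩, ?_⟩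
    · exact joinT_free k hk ha _ ((joinT a N).overFinIso hcard).symm
    · exact Nat.card_congr ((joinT a N).overFinIso hcard).symm.mapEdgeSet
    · rintro e ⟨G', hfree, rfl⟩
      by_contra! hlt
      obtain ⟨e⟩ := hmax G' hfree (by rw [E2_eq, E2_eq]; omega)
      exact hlt.ne' (Nat.card_congr e.mapEdgeSet)
  rw [hex]
  constructor
  · rintro ⟨hfree, hG⟩
    exact hmax G hfree (by rw [E2_eq, E2_eq, hG])
  · rintro ⟨e⟩
    exact ⟨joinT_free k hk ha G e, Nat.card_congr e.mapEdgeSet⟩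

lemma main_aux {m : ℕ} (k : Fin m → ℕ) (hk : ∀ i, 4 ≤ k i) (h : ℕ)
    (hh : h = #(univ.filter (fun i => Even (k i)))) (hh1 : 1 ≤ h) :
    ∃ n₀ : ℕ, ∀ n : ℕ, n > n₀ → ∀ G : SimpleGraph (Fin n),
      (¬ Contains G (disjointSigma (fun i => wheelGraph (k i))) ∧
        Nat.card G.edgeSet = exNum n (disjointSigma (fun i => wheelGraph (k i)))) ↔
      Nonempty (G ≃g joinT (h - 1) (n - h + 1)) := by
  obtain ⟨N, hN⟩ := exists_structure k hk hh ((h - 1) ^ 2 + 3 * (h - 1) + 2)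
  refine ⟨N + h, fun n hn G => ?_⟩
  have hna : n = (h - 1) + (n - h + 1) := by omega
  refine extremal_iff k hk hna (by omega) (fun G' hfree hE => ?_) G
  have hcard : Fintype.card (Fin n) = n := Fintype.card_fin n
  have hlow := E2_joinT_lower (h - 1) (n - h + 1)
  rw [← hna] at hlow
  obtain ⟨B, cl, hB, hcl⟩ := hN (Fin n) G' (by omega) hfree (by rw [hcard]; omega)
  exact iso_of_structure G' B cl hcl hB (hcard.trans hna) hE

end Extremal

/-- `K_{h-1} ⊗ T(n-h+1,3)` is the unique extremal graph for a disjoint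
union of wheels with `h ≥ 1` even wheels. -/
theorem extremal_union_wheels_with_even (m : ℕ) (k : Fin m → ℕ) (hk : ∀ i, 4 ≤ k i)
    (h : ℕ) (hh : h = (Finset.univ.filter (fun i => Even (k i))).card) (hh1 : 1 ≤ h) :
    ∃ n₀ : ℕ, ∀ n : ℕ, n > n₀ → ∀ G : SimpleGraph (Fin n),
      (¬ Contains G (disjointSigma (fun i => wheelGraph (k i))) ∧
        Nat.card G.edgeSet = exNum n (disjointSigma (fun i => wheelGraph (k i)))) ↔
      Nonempty (G ≃g graphJoin (completeGraph (Fin (h - 1))) (turanGraph (n - h + 1) 3)) := by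
  exact main_aux k hk h hh hh1
end

section
/- Let W^h = W_{k_1} ∪ W_{k_2} ∪ ⋯ ∪ W_{k_m} be a vertex-disjoint union of m wheels (each k_i ≥ 4) in which at least one wheel has an even number of vertices, say exactly h ≥ 1 of them are even. Then for every n ≥ h−1, the join K_{h−1} ⊗ T(n−h+1, 3) of a complete graph on h−1 vertices with the Turán graph T(n−h+1,3) contains no subgraph isomorphic to W^h. -/
/-!
If an even wheel embedded with all its vertices in the Turán part, the parts of `T(N, 3)` would
properly 3-colour it. The colour of the hub is then forbidden on the rim, so the rim, a cycle of odd
length, would be 2-coloured, which is impossible (`wheelGraph_three_coloring_not_even`). Hence each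
of the `h` even wheels uses a vertex of `K_{h-1}`. The wheels are disjoint and the embedding is
injective, so these vertices are distinct: `h` of them among only `h - 1`.
-/

open SimpleGraph

/-- Even wheels are not 3-colourable: removing the hub's colour leaves two colours for an odd
cycle. -/
lemma wheelGraph_three_coloring_not_even {q : ℕ} (hq : 4 ≤ q)
    (c : (wheelGraph q).Coloring (Fin 3)) : ¬ Even q := by
  intro he
  have hodd : Odd (q - 1) := by grind
  have hub : ∀ x, c (Sum.inr x) ≠ c (Sum.inl ()) := fun x =>
    c.valid (by simp [wheelGraph, graphJoin])
  let d : (cycleGraph (q - 1)).Coloring {x : Fin 3 // x ≠ c (Sum.inl ())} :=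
    Coloring.mk (fun x => ⟨c (Sum.inr x), hub x⟩) (by
      intro u v huv heq
      exact c.valid (v := Sum.inr u) (w := Sum.inr v)
        (by simp [wheelGraph, graphJoin, huv, huv.ne]) (congrArg Subtype.val heq))
  have hcol := d.colorable
  have hcard : Fintype.card {x : Fin 3 // x ≠ c (Sum.inl ())} = 2 := by simp
  rw [hcard] at hcol
  have hle := hcol.chromaticNumber_le
  rw [chromaticNumber_cycleGraph_of_odd (q - 1) (by omega) hodd] at hle
  exact absurd hle (by decide)

lemma disjointSigma_adj_mk {ι : Type*} {V : ι → Type*} (G : ∀ i, SimpleGraph (V i)) (i : ι)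
    {u v : V i} (huv : (G i).Adj u v) : (disjointSigma G).Adj ⟨i, u⟩ ⟨i, v⟩ := by
  unfold disjointSigma
  rw [fromRel_adj]
  refine ⟨?_, Or.inl ⟨rfl, huv⟩⟩
  intro h
  exact huv.ne (eq_of_heq (Sigma.mk.inj h).2)

/-- `K_{h-1} ⊗ T(n-h+1,3)` contains no copy of the union of the wheels. -/
theorem join_turan_free_of_union_wheels (m : ℕ) (k : Fin m → ℕ) (hk : ∀ i, 4 ≤ k i)
    (h : ℕ) (hh : h = (Finset.univ.filter (fun i => Even (k i))).card) (hh1 : 1 ≤ h)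
    (n : ℕ) (hn : h - 1 ≤ n) :
    ¬ Contains (graphJoin (completeGraph (Fin (h - 1))) (turanGraph (n - h + 1) 3))
        (disjointSigma (fun i => wheelGraph (k i))) := by
  rintro ⟨f, hf⟩
  have key : ∀ i : Fin m, Even (k i) → ∃ v, ∃ a, f ⟨i, v⟩ = Sum.inl a := by
    intro i hi
    by_contra! hcon
    have hr : ∀ v, ∃ b, f ⟨i, v⟩ = Sum.inr b := by
      intro v
      rcases hv : f ⟨i, v⟩ with a | b
      · exact absurd hv (hcon v a)
      · exact ⟨b, rfl⟩
    choose g hg using hr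
    refine wheelGraph_three_coloring_not_even (hk i)
      (Coloring.mk (fun v => ⟨(g v : ℕ) % 3, Nat.mod_lt _ (by norm_num)⟩) ?_) hi
    intro u v huv heq
    have hadj := f.map_adj (disjointSigma_adj_mk (fun i => wheelGraph (k i)) i huv)
    rw [hg, hg] at hadj
    have hmod : (g u : ℕ) % 3 = (g v : ℕ) % 3 := congrArg Fin.val heq
    simp [graphJoin, turanGraph_adj, hmod] at hadj
  choose v a hva using key
  have hinj : Function.Injective
      (fun i : {i : Fin m // Even (k i)} => a i.1 i.2) := by
    intro i j hij
    have h1 : f ⟨i.1, v i.1 i.2⟩ = f ⟨j.1, v j.1 j.2⟩ := by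
      rw [hva, hva]
      exact congrArg Sum.inl hij
    exact Subtype.ext (congrArg Sigma.fst (hf h1))
  have hcard := Fintype.card_le_of_injective _ hinj
  rw [Fintype.card_subtype, Fintype.card_fin, ← hh] at hcard
  omega
end

section
/- Let k ≥ 2 and m ≥ 1 be integers, and let G be a graph containing no m pairwise vertex-disjoint copies of the wheel W_{2k+1}. If x is a vertex of G such that the subgraph of G induced by the neighborhood of x contains a complete bipartite graph K_{m(2k+1), m(2k+1)} as a subgraph, then the graph obtained from G by deleting x contains no m−1 pairwise vertex-disjoint copies of W_{2k+1}. -/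
/-!
Suppose `G - x` contained `m - 1` disjoint copies of `W_{2k+1}`. Together they occupy
`(m - 1)(2k + 1)` vertices, so at least `2k + 1 ≥ k` vertices of each side of the complete bipartite
graph inside the neighborhood of `x` are unused (`exists_avoiding`). Choosing `k` unused vertices
on each side and alternating between the sides gives a cycle `C_{2k}`, since adjacent vertices of an
even cycle have indices of opposite parity (`cycleGraph_adj_parity`). All its vertices are adjacent
to `x`, so with hub `x` it is one more copy of `W_{2k+1}` (`exists_wheel`), disjoint from the
others: `G` contains `m` disjoint copies, a contradiction.
-/

open SimpleGraph

/-- If an injective family has at least `#S + k` members, then `k` of them lie outside `S`. -/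
lemma exists_avoiding {V : Type*} {N k : ℕ} (g : Fin N → V) (hg : Function.Injective g)
    (S : Finset V) (h : S.card + k ≤ N) :
    ∃ a : Fin k → Fin N, Function.Injective a ∧ ∀ i, g (a i) ∉ S := by
  classical
  let T : Finset (Fin N) := Finset.univ.filter fun i => g i ∉ S
  have hS : (Finset.univ.filter fun i => g i ∈ S).card ≤ S.card :=
    Finset.card_le_card_of_injOn g (fun i hi => by simpa using hi) hg.injOn
  have hT : k ≤ T.card := by
    have := Finset.card_filter_add_card_filter_not (s := (Finset.univ : Finset (Fin N)))
      (fun i => g i ∈ S)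
    simp only [Finset.card_univ, Fintype.card_fin] at this
    change k ≤ (Finset.univ.filter fun i => g i ∉ S).card
    omega
  let e := T.orderEmbOfCardLe hT
  refine ⟨e, e.injective, fun i => ?_⟩
  have := T.orderEmbOfCardLe_mem hT i
  exact (Finset.mem_filter.1 this).2

lemma cycleGraph_adj_parity {n k : ℕ} (hn : n = 2 * k) {i j : Fin n}
    (h : (cycleGraph n).Adj i j) : i.val % 2 ≠ j.val % 2 := by
  rw [cycleGraph_adj', Fin.sub_def, Fin.sub_def] at h
  have hi := i.isLt
  have hj := j.isLt
  simp only at h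
  -- Each difference is at most `2n - 1`, so reducing it modulo the even `n` subtracts `0` or `n`.
  have key : ∀ p q : ℕ, p < n → q < n → (n - q + p) % n = 1 → p % 2 ≠ q % 2 := by
    intro p q hp hq hpq
    rcases lt_or_ge (n - q + p) n with h1 | h1
    · rw [Nat.mod_eq_of_lt h1] at hpq
      omega
    · rw [Nat.mod_eq_sub_mod h1, Nat.mod_eq_of_lt (by omega)] at hpq
      omega
  rcases h with h | h
  · exact key _ _ hi hj h
  · exact (key _ _ hj hi h).symm

/-- The edges of a complete bipartite graph with sides `a` and `b`, all of whose vertices are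
adjacent to `x`, yield a wheel with hub `x` whose rim alternates between `a` and `b`. -/
lemma exists_wheel_s8 {V : Type*} (G : SimpleGraph V) {k : ℕ} (x : V) (a b : Fin k → V)
    (ha : Function.Injective a) (hb : Function.Injective b)
    (hxa : ∀ i, G.Adj x (a i)) (hxb : ∀ i, G.Adj x (b i)) (hab : ∀ i j, G.Adj (a i) (b j)) :
    ∃ w : Unit ⊕ Fin (2 * k + 1 - 1) → V, Function.Injective w ∧
      (∀ u v, (wheelGraph (2 * k + 1)).Adj u v → G.Adj (w u) (w v)) ∧
      ∀ u, w u = x ∨ (∃ i, w u = a i) ∨ ∃ i, w u = b i := by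
  let r : Fin (2 * k + 1 - 1) → V := fun i =>
    if i.val % 2 = 0 then a ⟨i.val / 2, by omega⟩ else b ⟨i.val / 2, by omega⟩
  have hxr : ∀ i, G.Adj x (r i) := by
    intro i
    by_cases h : i.val % 2 = 0 <;> simp [r, h, hxa, hxb]
  have hr : Function.Injective r := by
    intro i j hij
    by_cases hi : i.val % 2 = 0 <;> by_cases hj : j.val % 2 = 0 <;>
      simp only [r, hi, hj, if_true, if_false] at hij
    · have := congrArg Fin.val (ha hij)
      simp only at this
      exact Fin.ext (by omega)
    · exact absurd hij (hab _ _).ne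
    · exact absurd hij.symm (hab _ _).ne
    · have := congrArg Fin.val (hb hij)
      simp only at this
      exact Fin.ext (by omega)
  have hrr : ∀ i j, (cycleGraph (2 * k + 1 - 1)).Adj i j → G.Adj (r i) (r j) := by
    intro i j hij
    have hp := cycleGraph_adj_parity (k := k) (by omega) hij
    by_cases hi : i.val % 2 = 0 <;> by_cases hj : j.val % 2 = 0
    · omega
    · simpa only [r, hi, hj, if_true, if_false] using hab _ _
    · simpa only [r, hi, hj, if_true, if_false] using (hab _ _).symm
    · omega
  refine ⟨Sum.elim (fun _ => x) r, ?_, ?_, ?_⟩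
  · exact (Function.injective_of_subsingleton _).sumElim hr fun _ i => (hxr i).ne
  · rintro (u | u) (v | v) h <;> simp [wheelGraph, graphJoin] at h ⊢
    · exact hxr v
    · exact (hxr u).symm
    · rcases h.2 with h | h
      · exact hrr _ _ h
      · exact (hrr _ _ h).symm
  · rintro (u | u)
    · exact Or.inl rfl
    · right
      by_cases h : u.val % 2 = 0
      · exact Or.inl ⟨_, by simp only [Sum.elim_inr, r, h, if_true]; rfl⟩
      · exact Or.inr ⟨_, by simp only [Sum.elim_inr, r, h, if_false]; rfl⟩

/-- deleting a vertex whose neighborhood contains a large complete bipartite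
graph leaves a graph with no `m-1` disjoint odd wheels. -/
theorem delete_rich_vertex (k m : ℕ) (hk : 2 ≤ k) (hm : 1 ≤ m) {V : Type*}
    (G : SimpleGraph V)
    (hG : ¬ Contains G (disjointCopies m (wheelGraph (2 * k + 1)))) (x : V)
    (hx : Contains (G.induce (G.neighborSet x))
      (completeBipartiteGraph (Fin (m * (2 * k + 1))) (Fin (m * (2 * k + 1))))) :
    ¬ Contains (G.induce {v | v ≠ x}) (disjointCopies (m - 1) (wheelGraph (2 * k + 1))) := by
  classical
  rintro ⟨f, hf⟩
  obtain ⟨g, hg⟩ := hx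
  apply hG
  let F : Fin (m - 1) × (Unit ⊕ Fin (2 * k + 1 - 1)) → V := fun p => (f p).1
  have hF : Function.Injective F := Subtype.val_injective.comp hf
  let S : Finset V := Finset.univ.image F
  have hFS : ∀ p, F p ∈ S := fun p => Finset.mem_image_of_mem F (Finset.mem_univ p)
  have hxS : x ∉ S := by
    intro h
    obtain ⟨p, -, hp⟩ := Finset.mem_image.1 h
    exact (f p).2 hp
  have hS : S.card + k ≤ m * (2 * k + 1) := by
    have h1 : S.card ≤ (m - 1) * (1 + (2 * k + 1 - 1)) := by
      refine Finset.card_image_le.trans ?_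
      simp
    obtain ⟨t, rfl⟩ : ∃ t, m = t + 1 := ⟨m - 1, by omega⟩
    simp only [Nat.add_sub_cancel] at h1
    nlinarith
  let A : Fin (m * (2 * k + 1)) → V := fun i => (g (Sum.inl i)).1
  let B : Fin (m * (2 * k + 1)) → V := fun i => (g (Sum.inr i)).1
  have hA : Function.Injective A := Subtype.val_injective.comp (hg.comp Sum.inl_injective)
  have hB : Function.Injective B := Subtype.val_injective.comp (hg.comp Sum.inr_injective)
  have hAB : ∀ i j, G.Adj (A i) (B j) := fun i j =>
    g.map_adj (v := Sum.inl i) (w := Sum.inr j) (by simp)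
  obtain ⟨a, ha, haS⟩ := exists_avoiding A hA S hS
  obtain ⟨b, hb, hbS⟩ := exists_avoiding B hB S hS
  obtain ⟨w, hw, hwG, hwr⟩ := exists_wheel_s8 G x (A ∘ a) (B ∘ b) (hA.comp ha) (hB.comp hb)
    (fun i => (g (Sum.inl (a i))).2) (fun i => (g (Sum.inr (b i))).2) (fun i j => hAB _ _)
  have hwS : ∀ u, w u ∉ S := by
    intro u
    rcases hwr u with h | ⟨i, h⟩ | ⟨i, h⟩ <;> rw [h]
    exacts [hxS, haS i, hbS i]
  -- The copies with index below `m - 1` are the given ones; the last copy is the new wheel.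
  let φ : Fin m × (Unit ⊕ Fin (2 * k + 1 - 1)) → V := fun p =>
    if h : p.1.val < m - 1 then F (⟨p.1.val, h⟩, p.2) else w p.2
  have hφ : ∀ i u v, (wheelGraph (2 * k + 1)).Adj u v → G.Adj (φ (i, u)) (φ (i, v)) := by
    intro i u v huv
    by_cases h : i.val < m - 1
    · simp only [φ, h, dif_pos]
      exact f.map_adj (v := (⟨i.val, h⟩, u)) (w := (⟨i.val, h⟩, v))
        (by simp [disjointCopies, huv, huv.ne])
    · simpa only [φ, h, dif_neg, not_false_eq_true] using hwG u v huv
  refine ⟨⟨φ, ?_⟩, ?_⟩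
  · rintro ⟨i, u⟩ ⟨j, v⟩ h
    simp only [disjointCopies, SimpleGraph.fromRel_adj] at h
    rcases h.2 with ⟨rfl, huv⟩ | ⟨rfl, huv⟩
    · exact hφ _ _ _ huv
    · exact (hφ _ _ _ huv).symm
  · rintro ⟨i, u⟩ ⟨j, v⟩ h
    change φ (i, u) = φ (j, v) at h
    by_cases hi : i.val < m - 1 <;> by_cases hj : j.val < m - 1 <;>
      simp only [φ, hi, hj, dif_pos, dif_neg, not_false_eq_true] at h
    · have := hF h
      simp only [Prod.mk.injEq, Fin.mk.injEq] at this
      exact Prod.ext (Fin.ext this.1) this.2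
    · exact absurd (h ▸ hFS _) (hwS v)
    · exact absurd (h ▸ hFS _) (hwS u)
    · exact Prod.ext (Fin.ext (by simp only; omega)) (hw h)
end

section
/- Let k ≥ 2 and let G be a graph whose vertex set is partitioned into two parts B and C such that: every vertex of B is adjacent to every vertex of C; the induced subgraph G[B] has maximum degree at most k−1 and contains no path on 2k−1 vertices; and the induced subgraph G[C] has at most one edge. Then G contains no subgraph isomorphic to the wheel W_{2k+1}. -/
/-!
Suppose the hub `h` and the rim `r 0, …, r (2k-1)` form a wheel in `G`.

If `h ∈ B`, at most `k - 1` rim vertices lie in `B`. Each of them meets two of the `2k` rim edges,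
so at least two rim edges lie inside `C`, which has at most one edge.

If `h ∈ C`, every rim vertex in `C` spans an edge of `G[C]` with the hub, so at most one rim vertex
lies in `C`. Deleting that vertex (or an arbitrary one) from the rim leaves a path on `2k - 1`
vertices inside `B`.

The rim is indexed by `Fin n` with `n = 2k`, whose addition is cyclic.
-/

open SimpleGraph

/-- Any two edges inside `C` have the same endpoints, in one of the two orders. -/
theorem edge_unique {V : Type*} [Fintype V] {G : SimpleGraph V} {C : Set V}
    (hC : Nat.card (G.induce C).edgeSet ≤ 1) {a b c d : V} (ha : a ∈ C) (hb : b ∈ C)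
    (hc : c ∈ C) (hd : d ∈ C) (hab : G.Adj a b) (hcd : G.Adj c d) :
    (a = c ∧ b = d) ∨ (a = d ∧ b = c) := by
  have hs := Finite.card_le_one_iff_subsingleton.1 hC
  have h := hs.elim
    (⟨s(⟨a, ha⟩, ⟨b, hb⟩), by simpa using hab⟩ : (G.induce C).edgeSet)
    ⟨s(⟨c, hc⟩, ⟨d, hd⟩), by simpa using hcd⟩
  simpa using h

/-- Each vertex of `T` meets two of the `n` cyclic pairs `{i, i + 1}`, so at least two of the pairs
avoid `T`. -/
theorem exists_two_consecutive_pairs {n : ℕ} [NeZero n] (T : Finset (Fin n))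
    (hT : 2 * T.card + 2 ≤ n) :
    ∃ i j : Fin n, i ≠ j ∧ i ∉ T ∧ i + 1 ∉ T ∧ j ∉ T ∧ j + 1 ∉ T := by
  classical
  let U := T ∪ T.image (· - 1)
  have hU : U.card ≤ T.card + T.card :=
    (Finset.card_union_le _ _).trans (Nat.add_le_add_left Finset.card_image_le _)
  have hc : 1 < Uᶜ.card := by
    rw [Finset.card_compl, Fintype.card_fin]
    omega
  have key : ∀ i ∈ Uᶜ, i ∉ T ∧ i + 1 ∉ T := by
    intro i hi
    simp only [U, Finset.mem_compl, Finset.mem_union, not_or] at hi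
    exact ⟨hi.1, fun h => hi.2 (Finset.mem_image.2 ⟨i + 1, h, by simp⟩)⟩
  obtain ⟨i, hi, j, hj, hij⟩ := Finset.one_lt_card.1 hc
  exact ⟨i, j, hij, (key i hi).1, (key i hi).2, (key j hj).1, (key j hj).2⟩

/-- Deleting the vertex `i₀` from an `n`-cycle leaves a path on `n - 1` vertices. -/
theorem contains_path_of_rim {V : Type*} {G : SimpleGraph V} {B : Set V} {n : ℕ} [NeZero n]
    (r : Fin n → V) (hr : Function.Injective r) (hadj : ∀ i, G.Adj (r i) (r (i + 1)))
    (i₀ : Fin n) (hB : ∀ i, i ≠ i₀ → r i ∈ B) :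
    Contains (G.induce B) (pathGraph (n - 1)) := by
  let p : Fin (n - 1) → Fin n := fun j => i₀ + ⟨j.val + 1, by omega⟩
  have hp : ∀ j, p j ≠ i₀ := by
    intro j h
    have h0 : (⟨j.val + 1, by omega⟩ : Fin n) = 0 := by simp only [p, add_eq_left] at h; exact h
    simpa using congrArg Fin.val h0
  have hstep : ∀ u v : Fin (n - 1), u.val + 1 = v.val → p v = p u + 1 := by
    intro u v huv
    simp only [p, add_assoc]
    congr 1
    apply Fin.ext
    have hv := v.isLt
    rw [Fin.val_add, Fin.val_one', Nat.add_mod_mod]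
    rw [Nat.mod_eq_of_lt (by dsimp only; omega)]
    dsimp only
    omega
  have hpadj : ∀ u v : Fin (n - 1), u.val + 1 = v.val → G.Adj (r (p u)) (r (p v)) := by
    intro u v huv
    rw [hstep u v huv]
    exact hadj _
  refine ⟨⟨fun j => ⟨r (p j), hB _ (hp j)⟩, ?_⟩, ?_⟩
  · intro u v huv
    rcases pathGraph_adj.1 huv with h | h
    · exact hpadj u v h
    · exact (hpadj v u h).symm
  · intro u v huv
    have h1 : p u = p v := hr (congrArg Subtype.val huv)
    have h2 := congrArg Fin.val (add_left_cancel h1)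
    apply Fin.ext
    simpa using h2

/-- the extremal construction is `W_{2k+1}`-free. -/
theorem construction_is_wheel_free (k : ℕ) (hk : 2 ≤ k) {V : Type*} [Fintype V]
    (G : SimpleGraph V) (B C : Set V) (hdisj : Disjoint B C)
    (hunion : B ∪ C = Set.univ)
    (hcross : ∀ b ∈ B, ∀ c ∈ C, G.Adj b c)
    (hdeg : ∀ v ∈ B, {u ∈ B | G.Adj v u}.ncard ≤ k - 1)
    (hpath : ¬ Contains (G.induce B) (pathGraph (2 * k - 1)))
    (hC : Nat.card (G.induce C).edgeSet ≤ 1) :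
    ¬ Contains G (wheelGraph (2 * k + 1)) := by
  rintro ⟨f, hf⟩
  have : NeZero (2 * k) := ⟨by omega⟩
  let h : V := f (Sum.inl ())
  let r : Fin (2 * k) → V := fun i => f (Sum.inr i)
  have hr : Function.Injective r := fun i j hij => Sum.inr_injective (hf hij)
  have hhub : ∀ i, G.Adj h (r i) := fun i => f.map_rel (by
    simp [wheelGraph, graphJoin])
  have hadj : ∀ i, G.Adj (r i) (r (i + 1)) := fun i => f.map_rel (by
    have h1 : (1 : Fin (2 * k)).val = 1 := by
      rw [Fin.val_one', Nat.mod_eq_of_lt (by omega)]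
    have hne : i ≠ i + 1 := by
      intro e
      have : (1 : Fin (2 * k)) = 0 := left_eq_add.1 e
      simp [this] at h1
    have hc : (cycleGraph (2 * k)).Adj i (i + 1) := by
      rw [cycleGraph_adj']
      right
      simpa using h1
    exact ⟨fun e => hne (Sum.inr_injective e), Or.inl hc⟩)
  have hmem : ∀ v, v ∉ B → v ∈ C := fun v hv =>
    ((hunion ▸ Set.mem_univ v : v ∈ B ∪ C)).resolve_left hv
  classical
  by_cases hh : h ∈ B
  · let T : Finset (Fin (2 * k)) := Finset.univ.filter fun i => r i ∈ B
    have hT : T.card ≤ k - 1 := by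
      refine le_trans ?_ (hdeg h hh)
      rw [← Finset.card_image_of_injective T hr, ← Set.ncard_coe_finset]
      refine Set.ncard_le_ncard ?_ (Set.toFinite _)
      intro v hv
      obtain ⟨i, hi, rfl⟩ := Finset.mem_image.1 (Finset.mem_coe.1 hv)
      exact ⟨(Finset.mem_filter.1 hi).2, hhub i⟩
    have hTC : ∀ i, i ∉ T → r i ∈ C := fun i hi => hmem _ (by simpa [T] using hi)
    obtain ⟨i, j, hij, hi, hi', hj, hj'⟩ := exists_two_consecutive_pairs T (by omega)
    rcases edge_unique hC (hTC _ hi) (hTC _ hi') (hTC _ hj) (hTC _ hj') (hadj i) (hadj j) with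
      ⟨e, -⟩ | ⟨e₁, e₂⟩
    · exact hij (hr e)
    · -- Two rim edges traversed in opposite directions would give `2 = 0` modulo `2k ≥ 4`.
      have e₁ := hr e₁
      have e₂ := hr e₂
      rw [e₁, add_assoc, add_eq_left] at e₂
      have e₃ := congrArg Fin.val e₂
      rw [Fin.val_add, Fin.val_one', Nat.mod_eq_of_lt (a := 1) (by omega),
        Nat.mod_eq_of_lt (by omega)] at e₃
      simp at e₃
  · have hhC := hmem h hh
    apply hpath
    by_cases hex : ∃ i₀, r i₀ ∈ C
    · obtain ⟨i₀, hi₀⟩ := hex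
      refine contains_path_of_rim r hr hadj i₀ fun i hi => ?_
      by_contra hiB
      rcases edge_unique hC hhC (hmem _ hiB) hhC hi₀ (hhub i) (hhub i₀) with ⟨-, e⟩ | ⟨e, -⟩
      · exact hi (hr e)
      · exact (hhub i₀).ne e
    · exact contains_path_of_rim r hr hadj 0 fun i _ => by
        by_contra hiB
        exact hex ⟨i, hmem _ hiB⟩
end
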